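/- There exists a universal constant κ ∈ [2,∞) with the following property. Let q ∈ [2,∞), n ∈ ℕ, and let (X,‖·‖_X) and (Y,‖·‖_Y) be Banach spaces with dim(X)=n and m_q(Y)<∞. Let |·| be any Hilbertian norm on X, identifying X with ℝ^n. Set γ := I_q(X)/(√n·M(X)) and K := κ·n^{1/4}·m_q(Y)·√(I_q(X)M(X)). Then every compactly supported Lipschitz function f:ℝ^n→Y satisfies (∫_{ℝ^n} ∫_0^∞ fint_{x+tB_X} ‖f(y) − Taylor¹_x(H_{γt²}f)(y)‖_Y^q / t^{q+1} dy dt dx)^{1/q} ≤ K·|supp(f)|^{1/q}·‖f‖_{Lip(X,Y)}. -/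

import Mathlib

open MeasureTheory Metric Set ENNReal

noncomputable section

universe u

/-- `N` is a norm on the real vector space `V`. -/
def IsNorm {V : Type*} [AddCommGroup V] [Module ℝ V] (N : V → ℝ) : Prop :=
  (∀ x, N x = 0 → x = 0) ∧ (∀ (a : ℝ) (x : V), N (a • x) = |a| * N x) ∧
    (∀ x y : V, N (x + y) ≤ N x + N y)

/-- `m` is an upper bound for the martingale cotype `q` constant `𝔪_q(Y)` of `Y`. -/
def MartCotypeBound (q : ℝ) (Y : Type*) [NormedAddCommGroup Y] [NormedSpace ℝ Y]
    [CompleteSpace Y] (m : ℝ) : Prop :=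
  ∀ (Ω : Type) [MeasurableSpace Ω] (μ : Measure Ω) [IsProbabilityMeasure μ]
    (ℱ : Filtration ℕ ‹MeasurableSpace Ω›) (M : ℕ → Ω → Y), Martingale M ℱ μ →
    ∀ B : ℝ≥0∞, (∀ k, ∫⁻ ω, (‖M k ω‖₊ : ℝ≥0∞) ^ q ∂μ ≤ B) →
      ∑' k : ℕ, ∫⁻ ω, (‖M (k + 1) ω - M k ω‖₊ : ℝ≥0∞) ^ q ∂μ ≤ ENNReal.ofReal m ^ q * B

/-- The average of `N` over the Euclidean unit sphere (the quantity `M(X)`). -/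
def MX {n : ℕ} (N : EuclideanSpace ℝ (Fin n) → ℝ) : ℝ :=
  ⨍ σ : sphere (0 : EuclideanSpace ℝ (Fin n)) 1, N σ
    ∂((volume : Measure (EuclideanSpace ℝ (Fin n))).toSphere)

/-- The quantity `I_q(X) = (⨍_{B_X} |x|^q dx)^{1/q}`. -/
def IqX {n : ℕ} (q : ℝ) (N : EuclideanSpace ℝ (Fin n) → ℝ) : ℝ :=
  (⨍ x in {x : EuclideanSpace ℝ (Fin n) | N x ≤ 1}, ‖x‖ ^ q) ^ (1 / q)

/-- The heat kernel `h_t(x) = (4πt)^{-n/2} e^{-|x|²/(4t)}` on `ℝⁿ`. -/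
def heatKernel (n : ℕ) (t : ℝ) (x : EuclideanSpace ℝ (Fin n)) : ℝ :=
  (4 * Real.pi * t) ^ (-(n : ℝ) / 2) * Real.exp (-‖x‖ ^ 2 / (4 * t))

/-- The heat evolute `H_t f = h_t ∗ f`. -/
def heat {n : ℕ} {Y : Type*} [NormedAddCommGroup Y] [NormedSpace ℝ Y]
    (t : ℝ) (f : EuclideanSpace ℝ (Fin n) → Y) (x : EuclideanSpace ℝ (Fin n)) : Y :=
  ∫ z, heatKernel n t z • f (x - z)

/-- The first-order Taylor polynomial `Taylor¹_x(g)(y) = g(x) + (y-x)·∇g(x)`. -/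
def taylor1 {n : ℕ} {Y : Type*} [NormedAddCommGroup Y] [NormedSpace ℝ Y]
    (g : EuclideanSpace ℝ (Fin n) → Y) (x y : EuclideanSpace ℝ (Fin n)) : Y :=
  g x + ∑ j, (y - x) j • fderiv ℝ g x (EuclideanSpace.single j 1)

/-- Minkowski's integral inequality. -/
theorem mink {Z X : Type*} [MeasurableSpace Z] [MeasurableSpace X] (ρ : Measure Z) (μ : Measure X)
    [SFinite ρ] [SFinite μ] {q : ℝ} (hq : 2 ≤ q) {T : Z → X → ℝ≥0∞}
    (hT : Measurable (Function.uncurry T)) :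
    (∫⁻ x, (∫⁻ z, T z x ∂ρ) ^ q ∂μ) ^ (1 / q) ≤ ∫⁻ z, (∫⁻ x, T z x ^ q ∂μ) ^ (1 / q) ∂ρ := by
  have hq0 : 0 < q := by linarith
  set w : Z → ℝ≥0∞ := fun z => (∫⁻ x, T z x ^ q ∂μ) ^ (1 / q) with hw
  have hTq : Measurable (Function.uncurry fun z x => T z x ^ q) := hT.pow_const q
  have hwm : Measurable w := (Measurable.lintegral_prod_right hTq).pow_const _
  have hwq : ∀ z, ∫⁻ x, T z x ^ q ∂μ = w z ^ q := by
    intro z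
    simp only [hw]
    rw [← ENNReal.rpow_mul, one_div_mul_cancel hq0.ne', ENNReal.rpow_one]
  set W := ∫⁻ z, w z ∂ρ with hW
  by_cases hWt : W = ∞
  · rw [hWt]; exact le_top
  obtain ⟨p, hpq⟩ : ∃ p : ℝ, p.HolderConjugate q := ⟨q.conjExponent,
    (Real.HolderConjugate.conjExponent (by linarith)).symm⟩
  have hp0 : 0 < p := hpq.pos
  have hpq1 : q / p = q - 1 := hpq.symm.div_conj_eq_sub_one
  have hfin : ∀ᵐ z ∂ρ, w z < ∞ := ae_lt_top hwm hWt
  have hzero : ∀ᵐ x ∂μ, ∀ᵐ z ∂ρ, w z = 0 → T z x = 0 := by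
    have hms : MeasurableSet {zx : X × Z | w zx.2 = 0 → T zx.2 zx.1 = 0} := by
      have h1 : MeasurableSet {zx : X × Z | w zx.2 = 0} :=
        (hwm.comp measurable_snd) (measurableSet_singleton 0)
      have h2 : MeasurableSet {zx : X × Z | T zx.2 zx.1 = 0} :=
        (hT.comp measurable_swap) (measurableSet_singleton 0)
      exact MeasurableSet.imp h1 h2
    refine (MeasureTheory.Measure.ae_ae_comm hms).2 ?_
    refine Filter.Eventually.of_forall fun z => ?_
    by_cases hz : w z = 0
    · have : ∫⁻ x, T z x ^ q ∂μ = 0 := by rw [hwq, hz, ENNReal.zero_rpow_of_pos hq0]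
      have h3 : Measurable fun x => T z x ^ q := hTq.comp measurable_prodMk_left
      rw [lintegral_eq_zero_iff h3] at this
      filter_upwards [this] with x hx _
      simpa [ENNReal.rpow_eq_zero_iff, hq0, hq0.not_gt] using hx
    · exact Filter.Eventually.of_forall fun x h => absurd h hz
  have key : ∫⁻ x, (∫⁻ z, T z x ∂ρ) ^ q ∂μ ≤ W ^ q := by
    have h1 : ∀ᵐ x ∂μ, (∫⁻ z, T z x ∂ρ) ^ q ≤
        W ^ (q - 1) * ∫⁻ z, T z x ^ q * w z ^ (-(q - 1)) ∂ρ := by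
      filter_upwards [hzero] with x hx
      have e1 : ∫⁻ z, T z x ∂ρ = ∫⁻ z, ((fun z => w z ^ (1 / p)) *
          (fun z => T z x * w z ^ (-(1 / p)))) z ∂ρ := by
        refine lintegral_congr_ae ?_
        filter_upwards [hx, hfin] with z h1 h2
        simp only [Pi.mul_apply]
        by_cases hz : w z = 0
        · rw [h1 hz]; simp
        · rw [mul_comm (T z x), ← mul_assoc, ← ENNReal.rpow_add _ _ hz h2.ne]
          simp
      have hTx : Measurable fun z => T z x := hT.comp measurable_prodMk_right
      have e2 := ENNReal.lintegral_mul_le_Lp_mul_Lq ρ hpq (f := fun z => w z ^ (1 / p))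
        (g := fun z => T z x * w z ^ (-(1 / p))) (by fun_prop) (by fun_prop)
      rw [← e1] at e2
      have e3 : ∫⁻ z, (w z ^ (1 / p)) ^ p ∂ρ = W := by
        rw [hW]; refine lintegral_congr fun z => ?_
        rw [← ENNReal.rpow_mul, one_div_mul_cancel hp0.ne', ENNReal.rpow_one]
      have e4 : ∫⁻ z, (T z x * w z ^ (-(1 / p))) ^ q ∂ρ
          = ∫⁻ z, T z x ^ q * w z ^ (-(q - 1)) ∂ρ := by
        refine lintegral_congr fun z => ?_
        rw [ENNReal.mul_rpow_of_nonneg _ _ hq0.le, ← ENNReal.rpow_mul]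
        congr 2
        rw [← hpq1]; ring
      rw [e3, e4] at e2
      calc (∫⁻ z, T z x ∂ρ) ^ q ≤ (W ^ (1 / p) *
            (∫⁻ z, T z x ^ q * w z ^ (-(q - 1)) ∂ρ) ^ (1 / q)) ^ q :=
            ENNReal.rpow_le_rpow e2 hq0.le
        _ = _ := by
            rw [ENNReal.mul_rpow_of_nonneg _ _ hq0.le, ← ENNReal.rpow_mul, ← ENNReal.rpow_mul,
              one_div_mul_cancel hq0.ne', ENNReal.rpow_one]
            congr 2
            rw [← hpq1]; ring
    have hM : Measurable (Function.uncurry fun (x : X) (z : Z) =>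
        T z x ^ q * w z ^ (-(q - 1))) :=
      (hTq.comp measurable_swap).mul ((hwm.comp measurable_snd).pow_const _)
    calc ∫⁻ x, (∫⁻ z, T z x ∂ρ) ^ q ∂μ
        ≤ ∫⁻ x, W ^ (q - 1) * ∫⁻ z, T z x ^ q * w z ^ (-(q - 1)) ∂ρ ∂μ := lintegral_mono_ae h1
      _ = W ^ (q - 1) * ∫⁻ x, ∫⁻ z, T z x ^ q * w z ^ (-(q - 1)) ∂ρ ∂μ :=
          lintegral_const_mul _ (Measurable.lintegral_prod_right hM)
      _ = W ^ (q - 1) * ∫⁻ z, ∫⁻ x, T z x ^ q * w z ^ (-(q - 1)) ∂μ ∂ρ := by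
          rw [lintegral_lintegral_swap hM.aemeasurable]
      _ ≤ W ^ (q - 1) * W := by
          gcongr
          rw [hW]
          refine lintegral_mono_ae ?_
          filter_upwards [hfin] with z hz
          have h3 : Measurable fun x => T z x ^ q := hTq.comp measurable_prodMk_left
          rw [lintegral_mul_const _ h3, hwq]
          by_cases h0 : w z = 0
          · rw [h0, ENNReal.zero_rpow_of_pos hq0]; simp
          · rw [← ENNReal.rpow_add _ _ h0 hz.ne]; simp
      _ = W ^ q := by
          by_cases h0 : W = 0
          · rw [h0, ENNReal.zero_rpow_of_pos hq0]; simp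
          · nth_rewrite 2 [← ENNReal.rpow_one W]
            rw [← ENNReal.rpow_add _ _ h0 hWt]; simp
  calc (∫⁻ x, (∫⁻ z, T z x ∂ρ) ^ q ∂μ) ^ (1 / q) ≤ (W ^ q) ^ (1 / q) :=
        ENNReal.rpow_le_rpow key (by positivity)
    _ = W := by rw [← ENNReal.rpow_mul, mul_one_div_cancel hq0.ne', ENNReal.rpow_one]

/-- `L_q` functional on nonnegative functions. -/
def nq {X : Type*} [MeasurableSpace X] (q : ℝ) (μ : Measure X) (φ : X → ℝ≥0∞) : ℝ≥0∞ :=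
  (∫⁻ x, φ x ^ q ∂μ) ^ (1 / q)

theorem nq_mono {X : Type*} [MeasurableSpace X] {q : ℝ} (hq : 2 ≤ q) (μ : Measure X)
    {φ ψ : X → ℝ≥0∞} (h : ∀ x, φ x ≤ ψ x) : nq q μ φ ≤ nq q μ ψ := by
  unfold nq
  have hq0 : 0 ≤ q := by linarith
  refine ENNReal.rpow_le_rpow (lintegral_mono fun x => ENNReal.rpow_le_rpow (h x) hq0)
    (by positivity)

theorem nq_rpow {X : Type*} [MeasurableSpace X] {q : ℝ} (hq : 2 ≤ q) (μ : Measure X)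
    (φ : X → ℝ≥0∞) : nq q μ φ ^ q = ∫⁻ x, φ x ^ q ∂μ := by
  unfold nq
  rw [← ENNReal.rpow_mul, one_div_mul_cancel (by linarith), ENNReal.rpow_one]

theorem nq_const_mul {X : Type*} [MeasurableSpace X] {q : ℝ} (hq : 2 ≤ q) (μ : Measure X)
    (c : ℝ≥0∞) {φ : X → ℝ≥0∞} (hφ : Measurable φ) :
    nq q μ (fun x => c * φ x) = c * nq q μ φ := by
  unfold nq
  have hq0 : 0 ≤ q := by linarith
  simp_rw [ENNReal.mul_rpow_of_nonneg _ _ hq0]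
  rw [lintegral_const_mul _ (hφ.pow_const q), ENNReal.mul_rpow_of_nonneg _ _ (by positivity),
    ← ENNReal.rpow_mul, mul_one_div_cancel (by linarith), ENNReal.rpow_one]

theorem nq_lintegral {Z X : Type*} [MeasurableSpace Z] [MeasurableSpace X] (ρ : Measure Z)
    (μ : Measure X)
    [SFinite ρ] [SFinite μ] {q : ℝ} (hq : 2 ≤ q) {T : Z → X → ℝ≥0∞}
    (hT : Measurable (Function.uncurry T)) :
    nq q μ (fun x => ∫⁻ z, T z x ∂ρ) ≤ ∫⁻ z, nq q μ (T z) ∂ρ := mink ρ μ hq hT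

theorem nq_tsum {X : Type*} [MeasurableSpace X]
    (μ : Measure X) [SFinite μ] {q : ℝ} (hq : 2 ≤ q) {T : ℕ → X → ℝ≥0∞}
    (hT : ∀ k, Measurable (T k)) :
    nq q μ (fun x => ∑' k, T k x) ≤ ∑' k, nq q μ (T k) := by
  have := nq_lintegral (Measure.count : Measure ℕ) μ hq (T := T)
    (measurable_from_prod_countable_right hT)
  simpa [lintegral_count] using this

theorem nq_add {X : Type*} [MeasurableSpace X]
    (μ : Measure X) {q : ℝ} (hq : 2 ≤ q) {φ ψ : X → ℝ≥0∞}
    (hφ : Measurable φ) (hψ : Measurable ψ) :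
    nq q μ (fun x => φ x + ψ x) ≤ nq q μ φ + nq q μ ψ := by
  exact ENNReal.lintegral_Lp_add_le hφ.aemeasurable hψ.aemeasurable (by linarith)

set_option linter.unusedSectionVars false

theorem hk_nonneg (n : ℕ) {t : ℝ} (ht : 0 < t) (x : EuclideanSpace ℝ (Fin n)) :
    0 ≤ heatKernel n t x := by unfold heatKernel; positivity

theorem hk_cont (n : ℕ) (t : ℝ) : Continuous (heatKernel n t) := by
  unfold heatKernel; fun_prop

theorem hk_meas (n : ℕ) :
    Measurable (fun p : ℝ × EuclideanSpace ℝ (Fin n) => heatKernel n p.1 p.2) := by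
  unfold heatKernel; fun_prop

theorem hk_even (n : ℕ) (t : ℝ) (x : EuclideanSpace ℝ (Fin n)) :
    heatKernel n t (-x) = heatKernel n t x := by simp [heatKernel]

theorem hk_integral (n : ℕ) {t : ℝ} (ht : 0 < t) : ∫ x, heatKernel n t x = 1 := by
  unfold heatKernel
  rw [integral_const_mul]
  have := GaussianFourier.integral_rexp_neg_mul_sq_norm (V := EuclideanSpace ℝ (Fin n))
    (b := 1 / (4 * t)) (by positivity)
  simp only [finrank_euclideanSpace, Fintype.card_fin] at this
  have e : ∀ v : EuclideanSpace ℝ (Fin n), -(1 / (4 * t)) * ‖v‖ ^ 2 = -‖v‖ ^ 2 / (4 * t) := by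
    intro v; ring
  simp_rw [e] at this
  rw [this]
  have h2 : Real.pi / (1 / (4 * t)) = 4 * Real.pi * t := by field_simp
  rw [h2, ← Real.rpow_add (by positivity)]
  have : -(n : ℝ) / 2 + n / 2 = 0 := by ring
  rw [this, Real.rpow_zero]

theorem hk_integrable (n : ℕ) {t : ℝ} (ht : 0 < t) : Integrable (heatKernel n t) := by
  by_contra h
  have := hk_integral n ht
  rw [integral_undef h] at this
  norm_num at this

/-- heat measure -/
def gm (n : ℕ) (t : ℝ) : Measure (EuclideanSpace ℝ (Fin n)) :=
  volume.withDensity (fun z => ENNReal.ofReal (heatKernel n t z))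

theorem gm_prob (n : ℕ) {t : ℝ} (ht : 0 < t) : IsProbabilityMeasure (gm n t) := by
  constructor
  unfold gm
  rw [withDensity_apply _ MeasurableSet.univ, Measure.restrict_univ,
    ← ofReal_integral_eq_lintegral_ofReal (hk_integrable n ht)
      (Filter.Eventually.of_forall (hk_nonneg n ht)), hk_integral n ht, ENNReal.ofReal_one]

instance gm_sfinite (n : ℕ) (t : ℝ) : SFinite (gm n t) := by
  unfold gm; infer_instance

theorem gm_integral (n : ℕ) {t : ℝ} (ht : 0 < t) {F : Type*} [NormedAddCommGroup F]
    [NormedSpace ℝ F] (φ : EuclideanSpace ℝ (Fin n) → F) :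
    ∫ z, φ z ∂(gm n t) = ∫ z, heatKernel n t z • φ z := by
  unfold gm
  rw [integral_withDensity_eq_integral_toReal_smul]
  · refine integral_congr_ae (Filter.Eventually.of_forall fun z => ?_)
    simp only [ENNReal.toReal_ofReal (hk_nonneg n ht z)]
  · exact (hk_cont n t).measurable.ennreal_ofReal
  · simp

theorem gm_charFun (n : ℕ) {t : ℝ} (ht : 0 < t) (ξ : EuclideanSpace ℝ (Fin n)) :
    charFun (gm n t) ξ = Complex.exp (-(t * ‖ξ‖ ^ 2 : ℝ)) := by
  rw [charFun_apply, gm_integral n ht]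
  have h := GaussianFourier.integral_cexp_neg_mul_sq_norm_add (V := EuclideanSpace ℝ (Fin n))
    (b := ((1 / (4 * t) : ℝ) : ℂ)) (by rw [Complex.ofReal_re]; positivity) Complex.I ξ
  have e : ∀ z : EuclideanSpace ℝ (Fin n), heatKernel n t z • Complex.exp
      (((inner ℝ z ξ : ℝ) : ℂ) * Complex.I) = (((4 * Real.pi * t) ^ (-(n : ℝ) / 2) : ℝ) : ℂ) *
      Complex.exp (-((1 / (4 * t) : ℝ) : ℂ) * ‖z‖ ^ 2 + Complex.I * (inner ℝ ξ z : ℝ)) := by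
    intro z
    unfold heatKernel
    rw [Complex.real_smul, Complex.exp_add, real_inner_comm]
    push_cast
    rw [mul_assoc]
    congr 3
    · ring_nf
    · ring
  simp_rw [e]
  rw [integral_const_mul, h]
  have h2 : (Real.pi : ℂ) / ((1 / (4 * t) : ℝ) : ℂ) = ((4 * Real.pi * t : ℝ) : ℂ) := by
    have : (t : ℂ) ≠ 0 := by exact_mod_cast ht.ne'
    push_cast; field_simp
  rw [h2]
  simp only [finrank_euclideanSpace, Fintype.card_fin]
  have h3 : ((4 * Real.pi * t : ℝ) : ℂ) ^ ((n : ℂ) / 2)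
      = (((4 * Real.pi * t) ^ ((n : ℝ) / 2) : ℝ) : ℂ) := by
    rw [Complex.ofReal_cpow (by positivity)]; push_cast; rfl
  rw [h3, ← mul_assoc, ← Complex.ofReal_mul, ← Real.rpow_add (by positivity)]
  have h4 : -(n : ℝ) / 2 + n / 2 = 0 := by ring
  rw [h4, Real.rpow_zero, Complex.ofReal_one, one_mul]
  congr 1
  have : (t : ℂ) ≠ 0 := by exact_mod_cast ht.ne'
  rw [Complex.I_sq]; push_cast; field_simp

theorem gm_conv (n : ℕ) {s t : ℝ} (hs : 0 < s) (ht : 0 < t) :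
    (gm n s).conv (gm n t) = gm n (s + t) := by
  have := gm_prob n hs
  have := gm_prob n ht
  have := gm_prob n (add_pos hs ht)
  apply Measure.ext_of_charFun
  ext ξ
  rw [charFun_conv, gm_charFun n hs, gm_charFun n ht, gm_charFun n (add_pos hs ht),
    ← Complex.exp_add]
  congr 1; push_cast; ring

theorem gm_scale (n : ℕ) {t : ℝ} (ht : 0 < t) :
    (gm n 1).map (fun x => Real.sqrt t • x) = gm n t := by
  have := gm_prob n ht
  have := gm_prob n one_pos
  have : IsProbabilityMeasure ((gm n 1).map (fun x => Real.sqrt t • x)) :=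
    Measure.isProbabilityMeasure_map (by fun_prop)
  apply Measure.ext_of_charFun
  ext ξ
  rw [charFun_map_smul, gm_charFun n one_pos, gm_charFun n ht]
  congr 2
  rw [norm_smul, Real.norm_of_nonneg (Real.sqrt_nonneg _), mul_pow, Real.sq_sqrt ht.le, one_mul]

theorem gm_neg (n : ℕ) {t : ℝ} (ht : 0 < t) :
    (gm n t).map (fun x => -x) = gm n t := by
  have := gm_prob n ht
  have : IsProbabilityMeasure ((gm n t).map (fun x => -x)) :=
    Measure.isProbabilityMeasure_map (by fun_prop)
  apply Measure.ext_of_charFun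
  ext ξ
  have := charFun_map_smul (μ := gm n t) (-1) ξ
  simp only [neg_smul, one_smul] at this
  rw [this, gm_charFun n ht, gm_charFun n ht, norm_neg]

/-- `L_1` modulus of continuity of the heat kernel. -/
theorem hk_diff (n : ℕ) {u : ℝ} (hu : 0 < u) (v : EuclideanSpace ℝ (Fin n)) :
    Integrable (fun z => |heatKernel n u (z + v) - heatKernel n u z|) ∧
    ∫ z, |heatKernel n u (z + v) - heatKernel n u z| ≤ 3 * ‖v‖ / Real.sqrt u := by
  have i1 : Integrable (fun z => heatKernel n u (z + v)) := (hk_integrable n hu).comp_add_right v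
  have i2 := hk_integrable n hu
  refine ⟨(i1.sub i2).abs, ?_⟩
  by_cases hv : v = 0
  · simp [hv]
  have hv0 : 0 < ‖v‖ := norm_pos_iff.2 hv
  have i3 : Integrable (fun z => heatKernel n u (z + (1 / 2 : ℝ) • v)) :=
    (hk_integrable n hu).comp_add_right _
  have e3 : ∫ z, heatKernel n u (z + (1 / 2 : ℝ) • v) = 1 := by
    rw [integral_add_right_eq_self (fun z => heatKernel n u z), hk_integral n hu]
  have e1 : ∫ z, heatKernel n u (z + v) = 1 := by
    rw [integral_add_right_eq_self (fun z => heatKernel n u z), hk_integral n hu]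
  have hsu : 0 < Real.sqrt u := Real.sqrt_pos.2 hu
  set lam := Real.sqrt u / ‖v‖ with hlam
  have hl : 0 < lam := by positivity
  set c := Real.exp (-‖v‖ ^ 2 / (16 * u)) with hc
  have hprod : ∀ z, (heatKernel n u (z + (1 / 2 : ℝ) • v) * c) ^ 2
      = heatKernel n u (z + v) * heatKernel n u z := by
    intro z
    unfold heatKernel
    rw [mul_pow, mul_pow, hc, mul_mul_mul_comm, ← Real.exp_add, ← pow_two, mul_assoc, ← mul_pow,
      ← Real.exp_add, ← Real.exp_nat_mul]
    congr 2
    have h1 : ‖z + v‖ ^ 2 = ‖z‖ ^ 2 + 2 * inner ℝ z v + ‖v‖ ^ 2 := norm_add_sq_real z v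
    have h2 : ‖z + (1 / 2 : ℝ) • v‖ ^ 2 = ‖z‖ ^ 2 + inner ℝ z v + ‖v‖ ^ 2 / 4 := by
      rw [norm_add_sq_real, inner_smul_right, norm_smul]; norm_num; ring
    rw [h1, h2]; push_cast; field_simp; ring
  have hpt : ∀ z, |heatKernel n u (z + v) - heatKernel n u z| ≤
      lam / 2 * (heatKernel n u (z + v) + heatKernel n u z
        - 2 * (heatKernel n u (z + (1 / 2 : ℝ) • v) * c))
      + 1 / lam * (heatKernel n u (z + v) + heatKernel n u z) := by
    intro z
    have ha := hk_nonneg n hu (z + v)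
    have hb := hk_nonneg n hu z
    have hd : 0 ≤ heatKernel n u (z + (1 / 2 : ℝ) • v) * c :=
      mul_nonneg (hk_nonneg n hu _) (Real.exp_pos _).le
    have hp := hprod z
    set d := heatKernel n u (z + (1 / 2 : ℝ) • v) * c
    obtain ⟨a, ha0, haa⟩ : ∃ a : ℝ, 0 ≤ a ∧ a ^ 2 = heatKernel n u (z + v) :=
      ⟨_, Real.sqrt_nonneg _, Real.sq_sqrt ha⟩
    obtain ⟨b, hb0, hbb⟩ : ∃ b : ℝ, 0 ≤ b ∧ b ^ 2 = heatKernel n u z :=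
      ⟨_, Real.sqrt_nonneg _, Real.sq_sqrt hb⟩
    rw [← haa, ← hbb] at hp ⊢
    have hdab : d = a * b := by
      rw [← mul_pow] at hp
      exact (pow_left_inj₀ hd (by positivity) two_ne_zero).1 hp
    rw [hdab]
    have e : a ^ 2 - b ^ 2 = (a - b) * (a + b) := by ring
    have key : |a - b| * (a + b) ≤ lam / 2 * (a - b) ^ 2 + 1 / (2 * lam) * (a + b) ^ 2 := by
      have h0 : 0 ≤ (lam * |a - b| - (a + b)) ^ 2 / (2 * lam) := by positivity
      have h1 : (lam * |a - b| - (a + b)) ^ 2 / (2 * lam) = lam / 2 * |a - b| ^ 2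
        + 1 / (2 * lam) * (a + b) ^ 2 - |a - b| * (a + b) := by field_simp; ring
      rw [sq_abs] at h1
      linarith
    have h2 : 1 / (2 * lam) * (a + b) ^ 2 ≤ 1 / lam * (a ^ 2 + b ^ 2) := by
      have : 1 / (2 * lam) * (a + b) ^ 2 = 1 / lam * ((a + b) ^ 2 / 2) := by field_simp
      rw [this]
      have : (a + b) ^ 2 / 2 ≤ a ^ 2 + b ^ 2 := by nlinarith [sq_nonneg (a - b)]
      gcongr
    rw [e, abs_mul, abs_of_nonneg (add_nonneg ha0 hb0)]
    have : (a - b) ^ 2 = a ^ 2 + b ^ 2 - 2 * (a * b) := by ring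
    rw [← this]
    linarith
  have iA : Integrable (fun z => lam / 2 * (heatKernel n u (z + v) + heatKernel n u z
        - 2 * (heatKernel n u (z + (1 / 2 : ℝ) • v) * c))) :=
    ((i1.add i2).sub ((i3.mul_const c).const_mul 2)).const_mul _
  have iB : Integrable (fun z => 1 / lam * (heatKernel n u (z + v) + heatKernel n u z)) :=
    (i1.add i2).const_mul _
  have hIntg := integral_mono (i1.sub i2).abs (iA.add iB) hpt
  have hval : ∫ z, (lam / 2 * (heatKernel n u (z + v) + heatKernel n u z
        - 2 * (heatKernel n u (z + (1 / 2 : ℝ) • v) * c))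
      + 1 / lam * (heatKernel n u (z + v) + heatKernel n u z))
      = lam / 2 * (2 - 2 * c) + 1 / lam * 2 := by
    have i12 : Integrable (fun z => heatKernel n u (z + v) + heatKernel n u z) := i1.add i2
    rw [integral_add iA iB, integral_const_mul, integral_const_mul,
      integral_sub i12 ((i3.mul_const c).const_mul 2), integral_add i1 i2,
      integral_const_mul, integral_mul_const, e1, e3, hk_integral n hu]
    ring
  have hIntg2 : ∫ z, |heatKernel n u (z + v) - heatKernel n u z| ≤
      lam / 2 * (2 - 2 * c) + 1 / lam * 2 := by
    rw [← hval]; exact hIntg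
  refine hIntg2.trans ?_
  have hc1 : 1 - ‖v‖ ^ 2 / (16 * u) ≤ c := by
    have := Real.add_one_le_exp (-‖v‖ ^ 2 / (16 * u))
    rw [hc]; linarith [neg_div (16 * u) (‖v‖ ^ 2)]
  have h5 : lam / 2 * (2 - 2 * c) ≤ lam * (‖v‖ ^ 2 / (16 * u)) := by nlinarith
  have h6 : lam * (‖v‖ ^ 2 / (16 * u)) = ‖v‖ / Real.sqrt u / 16 := by
    rw [hlam]
    have : u = Real.sqrt u ^ 2 := (Real.sq_sqrt hu.le).symm
    rw [this, Real.sqrt_sq hsu.le]; field_simp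
  have h7 : 1 / lam * 2 = 2 * (‖v‖ / Real.sqrt u) := by rw [hlam]; field_simp
  have : 0 < ‖v‖ / Real.sqrt u := by positivity
  have h8 : 3 * ‖v‖ / Real.sqrt u = 3 * (‖v‖ / Real.sqrt u) := by ring
  rw [h8]; linarith

section heatsec
variable {n : ℕ} {Y : Type u} [NormedAddCommGroup Y] [NormedSpace ℝ Y]

theorem heat_eq {t : ℝ} (ht : 0 < t) (φ : EuclideanSpace ℝ (Fin n) → Y)
    (x : EuclideanSpace ℝ (Fin n)) : heat t φ x = ∫ z, φ (x - z) ∂(gm n t) := by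
  rw [gm_integral n ht]; rfl

theorem bdd_integrable {φ : EuclideanSpace ℝ (Fin n) → Y} {C : ℝ} (hm : StronglyMeasurable φ)
    (hb : ∀ x, ‖φ x‖ ≤ C) {t : ℝ} (ht : 0 < t) (x : EuclideanSpace ℝ (Fin n)) :
    Integrable (fun z => φ (x - z)) (gm n t) := by
  have := gm_prob n ht
  refine Integrable.of_bound (C := C) ?_ (Filter.Eventually.of_forall fun z => hb _)
  exact (hm.comp_measurable (by fun_prop)).aestronglyMeasurable

theorem heat_norm_le {φ : EuclideanSpace ℝ (Fin n) → Y} {C : ℝ}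
    (hb : ∀ x, ‖φ x‖ ≤ C) {t : ℝ} (ht : 0 < t) (x : EuclideanSpace ℝ (Fin n)) :
    ‖heat t φ x‖ ≤ C := by
  have := gm_prob n ht
  rw [heat_eq ht]
  simpa using norm_integral_le_of_norm_le_const (μ := gm n t)
    (Filter.Eventually.of_forall fun z => hb (x - z))

theorem heat_enorm_le (φ : EuclideanSpace ℝ (Fin n) → Y) {t : ℝ} (ht : 0 < t)
    (x : EuclideanSpace ℝ (Fin n)) :
    ‖heat t φ x‖ₑ ≤ ∫⁻ z, ‖φ (x - z)‖ₑ ∂(gm n t) := by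
  rw [heat_eq ht]; exact enorm_integral_le_lintegral_enorm _

theorem heat_sm {P : Type*} [MeasurableSpace P] {a : P → ℝ} {b : P → EuclideanSpace ℝ (Fin n)}
    {Φ : P → EuclideanSpace ℝ (Fin n) → Y} (ha : Measurable a) (hb : Measurable b)
    (hΦ : StronglyMeasurable (Function.uncurry Φ)) :
    StronglyMeasurable fun p => heat (a p) (Φ p) (b p) := by
  unfold heat
  refine StronglyMeasurable.integral_prod_right
    (f := fun (p : P) (z : EuclideanSpace ℝ (Fin n)) =>
      heatKernel n (a p) z • Φ p (b p - z)) ?_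
  refine StronglyMeasurable.smul ?_ ?_
  · exact ((hk_meas n).comp ((ha.comp measurable_fst).prodMk measurable_snd)).stronglyMeasurable
  · exact hΦ.comp_measurable (measurable_fst.prodMk ((hb.comp measurable_fst).sub measurable_snd))

theorem heat_sm' {P : Type*} [MeasurableSpace P] {a : P → ℝ} {b : P → EuclideanSpace ℝ (Fin n)}
    {φ : EuclideanSpace ℝ (Fin n) → Y} (ha : Measurable a) (hb : Measurable b)
    (hφ : StronglyMeasurable φ) :
    StronglyMeasurable fun p => heat (a p) φ (b p) :=
  heat_sm (Φ := fun _ => φ) ha hb (hφ.comp_measurable measurable_snd)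

theorem heat_heat {φ : EuclideanSpace ℝ (Fin n) → Y} {C : ℝ} (hm : StronglyMeasurable φ)
    (hb : ∀ x, ‖φ x‖ ≤ C) {s t : ℝ} (hs : 0 < s) (ht : 0 < t) (x : EuclideanSpace ℝ (Fin n)) :
    heat s (heat t φ) x = heat (s + t) φ x := by
  have i := bdd_integrable hm hb (add_pos hs ht) x
  rw [heat_eq hs, heat_eq (add_pos hs ht)]
  rw [← gm_conv n hs ht] at i ⊢
  rw [integral_conv i]
  refine integral_congr_ae (Filter.Eventually.of_forall fun z => ?_)
  simp only [heat_eq ht, sub_sub]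

theorem heat_scale {φ : EuclideanSpace ℝ (Fin n) → Y} (hm : StronglyMeasurable φ)
    {t : ℝ} (ht : 0 < t) (x : EuclideanSpace ℝ (Fin n)) :
    heat t φ x = ∫ z, φ (x - Real.sqrt t • z) ∂(gm n 1) := by
  rw [heat_eq ht, ← gm_scale n ht, integral_map (by fun_prop)]
  exact (hm.comp_measurable (by fun_prop)).aestronglyMeasurable

theorem heat_sub {φ ψ : EuclideanSpace ℝ (Fin n) → Y} {C D : ℝ} (hm : StronglyMeasurable φ)
    (hb : ∀ x, ‖φ x‖ ≤ C) (hm' : StronglyMeasurable ψ)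
    (hb' : ∀ x, ‖ψ x‖ ≤ D) {s : ℝ} (hs : 0 < s) (x : EuclideanSpace ℝ (Fin n)) :
    heat s (fun y => φ y - ψ y) x = heat s φ x - heat s ψ x := by
  simp only [heat_eq hs]
  exact integral_sub (bdd_integrable hm hb hs x) (bdd_integrable hm' hb' hs x)

theorem heat_diff_eq {φ : EuclideanSpace ℝ (Fin n) → Y} {C : ℝ} (hm : StronglyMeasurable φ)
    (hb : ∀ x, ‖φ x‖ ≤ C) {u : ℝ} (hu : 0 < u) (x v : EuclideanSpace ℝ (Fin n)) :
    heat u φ (x + v) - heat u φ x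
      = ∫ z, (heatKernel n u (z + v) - heatKernel n u z) • φ (x - z) := by
  unfold heat
  have hmx : AEStronglyMeasurable (fun z => φ (x - z)) volume :=
    (hm.comp_measurable (by fun_prop)).aestronglyMeasurable
  have e : ∫ z, heatKernel n u z • φ (x + v - z)
      = ∫ z, heatKernel n u (z + v) • φ (x - z) := by
    rw [← integral_add_right_eq_self _ v]
    refine integral_congr_ae (Filter.Eventually.of_forall fun z => ?_)
    simp only [add_sub_add_right_eq_sub]
  have i2 : Integrable (fun z => heatKernel n u z • φ (x - z)) :=
    (hk_integrable n hu).smul_bdd C hmx (Filter.Eventually.of_forall fun z => hb _)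
  have i1 : Integrable (fun z => heatKernel n u (z + v) • φ (x - z)) :=
    ((hk_integrable n hu).comp_add_right v).smul_bdd C hmx
      (Filter.Eventually.of_forall fun z => hb _)
  rw [e, ← integral_sub i1 i2]
  simp only [sub_smul]

theorem heat_diff_enorm {φ : EuclideanSpace ℝ (Fin n) → Y} {C : ℝ} (hm : StronglyMeasurable φ)
    (hb : ∀ x, ‖φ x‖ ≤ C) {u : ℝ} (hu : 0 < u) (x v : EuclideanSpace ℝ (Fin n)) :
    ‖heat u φ (x + v) - heat u φ x‖ₑ
      ≤ ∫⁻ z, ‖φ (x - z)‖ₑ ∂(volume.withDensity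
        fun z => ENNReal.ofReal |heatKernel n u (z + v) - heatKernel n u z|) := by
  rw [heat_diff_eq hm hb hu]
  refine (enorm_integral_le_lintegral_enorm _).trans ?_
  have h1 : Measurable fun z => ENNReal.ofReal |heatKernel n u (z + v) - heatKernel n u z| := by
    have := hk_cont n u
    have h : Continuous fun z => |heatKernel n u (z + v) - heatKernel n u z| := by fun_prop
    exact h.measurable.ennreal_ofReal
  have h2 : Measurable fun z => ‖φ (x - z)‖ₑ :=
    (hm.comp_measurable (g := fun z => x - z) (by fun_prop)).enorm
  rw [lintegral_withDensity_eq_lintegral_mul _ h1 h2]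
  refine le_of_eq (lintegral_congr fun z => ?_)
  rw [enorm_smul, Pi.mul_apply, ← ofReal_norm (_ - _), Real.norm_eq_abs]

theorem hk_diff_mass {u : ℝ} (hu : 0 < u) (v : EuclideanSpace ℝ (Fin n)) :
    (volume.withDensity
        fun z => ENNReal.ofReal |heatKernel n u (z + v) - heatKernel n u z|) univ
      ≤ ENNReal.ofReal (3 * ‖v‖ / Real.sqrt u) := by
  rw [withDensity_apply _ MeasurableSet.univ, Measure.restrict_univ,
    ← ofReal_integral_eq_lintegral_ofReal (hk_diff n hu v).1
      (Filter.Eventually.of_forall fun _ => abs_nonneg _)]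
  exact ENNReal.ofReal_le_ofReal (hk_diff n hu v).2

theorem heat_lip {φ : EuclideanSpace ℝ (Fin n) → Y} {C : ℝ} (hm : StronglyMeasurable φ)
    (hb : ∀ x, ‖φ x‖ ≤ C) {u : ℝ} (hu : 0 < u) (x v : EuclideanSpace ℝ (Fin n)) :
    ‖heat u φ (x + v) - heat u φ x‖ ≤ C * (3 * ‖v‖ / Real.sqrt u) := by
  have hC : 0 ≤ C := (norm_nonneg _).trans (hb 0)
  have h := heat_diff_enorm hm hb hu x v
  have h2 : ‖heat u φ (x + v) - heat u φ x‖ₑ ≤ ENNReal.ofReal (C * (3 * ‖v‖ / Real.sqrt u)) := by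
    refine h.trans ?_
    calc _ ≤ ∫⁻ z, ENNReal.ofReal C ∂(volume.withDensity
        fun z => ENNReal.ofReal |heatKernel n u (z + v) - heatKernel n u z|) := by
          refine lintegral_mono fun z => ?_
          rw [← ofReal_norm]; exact ENNReal.ofReal_le_ofReal (hb _)
      _ ≤ _ := by
          rw [lintegral_const, ENNReal.ofReal_mul hC]
          gcongr
          exact hk_diff_mass hu v
  rw [← ofReal_norm] at h2
  exact (ENNReal.ofReal_le_ofReal_iff (by positivity)).1 h2

theorem heat_cont {φ : EuclideanSpace ℝ (Fin n) → Y} {C : ℝ} (hm : StronglyMeasurable φ)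
    (hb : ∀ x, ‖φ x‖ ≤ C) {u : ℝ} (hu : 0 < u) : Continuous (heat u φ) := by
  have hC : 0 ≤ C := (norm_nonneg _).trans (hb 0)
  refine (LipschitzWith.of_dist_le_mul (K := ⟨C * (3 / Real.sqrt u), by positivity⟩)
    fun x y => ?_).continuous
  have := heat_lip hm hb hu y (x - y)
  rw [add_sub_cancel] at this
  rw [dist_eq_norm, dist_eq_norm]
  refine this.trans (le_of_eq ?_)
  change _ = C * (3 / Real.sqrt u) * ‖x - y‖
  ring

theorem nq_translate {q : ℝ} (ψ : EuclideanSpace ℝ (Fin n) → ℝ≥0∞)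
    (a : EuclideanSpace ℝ (Fin n)) :
    nq q volume (fun x => ψ (x - a)) = nq q volume ψ := by
  unfold nq
  rw [lintegral_sub_right_eq_self (fun x => ψ x ^ q) a]

theorem nq_conv {q : ℝ} (hq : 2 ≤ q) {φ : EuclideanSpace ℝ (Fin n) → Y}
    (hm : StronglyMeasurable φ) (ρ : Measure (EuclideanSpace ℝ (Fin n))) [SFinite ρ] :
    nq q volume (fun x => ∫⁻ z, ‖φ (x - z)‖ₑ ∂ρ) ≤ ρ univ * nq q volume (fun x => ‖φ x‖ₑ) := by
  refine (nq_lintegral ρ volume hq (T := fun z x => ‖φ (x - z)‖ₑ) ?_).trans ?_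
  · exact (hm.comp_measurable (g := fun p : EuclideanSpace ℝ (Fin n) × EuclideanSpace ℝ (Fin n) =>
      p.2 - p.1) (by fun_prop)).enorm
  · simp only [nq_translate (q := q) (fun x => ‖φ x‖ₑ), lintegral_const]
    rw [mul_comm]

theorem nq_heat {q : ℝ} (hq : 2 ≤ q) {φ : EuclideanSpace ℝ (Fin n) → Y}
    (hm : StronglyMeasurable φ) {u : ℝ} (hu : 0 < u) :
    nq q volume (fun x => ‖heat u φ x‖ₑ) ≤ nq q volume (fun x => ‖φ x‖ₑ) := by
  have := gm_prob n hu
  refine (nq_mono hq _ fun x => heat_enorm_le φ hu x).trans ?_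
  refine (nq_conv hq hm _).trans ?_
  simp

theorem nq_heat_diff {q : ℝ} (hq : 2 ≤ q) {φ : EuclideanSpace ℝ (Fin n) → Y} {C : ℝ}
    (hm : StronglyMeasurable φ) (hb : ∀ x, ‖φ x‖ ≤ C) {u : ℝ} (hu : 0 < u)
    (v : EuclideanSpace ℝ (Fin n)) :
    nq q volume (fun x => ‖heat u φ (x + v) - heat u φ x‖ₑ) ≤
      ENNReal.ofReal (3 * ‖v‖ / Real.sqrt u) * nq q volume (fun x => ‖φ x‖ₑ) := by
  refine (nq_mono hq _ fun x => heat_diff_enorm hm hb hu x v).trans ?_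
  refine (nq_conv hq hm _).trans ?_
  gcongr
  exact hk_diff_mass hu v

end heatsec

section normfacts
variable {n : ℕ} {N : EuclideanSpace ℝ (Fin n) → ℝ}

theorem IsNorm.zero (hN : IsNorm N) : N 0 = 0 := by
  have := hN.2.1 0 0
  simpa using this

theorem IsNorm.neg (hN : IsNorm N) (x : EuclideanSpace ℝ (Fin n)) : N (-x) = N x := by
  have := hN.2.1 (-1) x
  simpa using this

theorem IsNorm.nonneg (hN : IsNorm N) (x : EuclideanSpace ℝ (Fin n)) : 0 ≤ N x := by
  have := hN.2.2 x (-x)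
  rw [hN.neg, add_neg_cancel, hN.zero] at this
  linarith

theorem IsNorm.pos (hN : IsNorm N) {x : EuclideanSpace ℝ (Fin n)} (hx : x ≠ 0) : 0 < N x :=
  lt_of_le_of_ne (hN.nonneg x) fun h => hx (hN.1 x h.symm)

theorem IsNorm.sum_le (hN : IsNorm N) {ι : Type*} (s : Finset ι)
    (v : ι → EuclideanSpace ℝ (Fin n)) : N (∑ i ∈ s, v i) ≤ ∑ i ∈ s, N (v i) := by
  classical
  induction s using Finset.induction_on with
  | empty => simp [hN.zero]
  | insert a s ha ih =>
    rw [Finset.sum_insert ha, Finset.sum_insert ha]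
    exact (hN.2.2 _ _).trans (by linarith)

theorem IsNorm.le_norm (hN : IsNorm N) : ∃ C : ℝ, 0 ≤ C ∧ ∀ x, N x ≤ C * ‖x‖ := by
  refine ⟨∑ i, N (EuclideanSpace.single i 1), Finset.sum_nonneg fun i _ => hN.nonneg _, fun x => ?_⟩
  have hx : x = ∑ i, x i • EuclideanSpace.single i (1 : ℝ) := by
    have := (EuclideanSpace.basisFun (Fin n) ℝ).sum_repr x
    simpa using this.symm
  conv_lhs => rw [hx]
  refine (hN.sum_le _ _).trans ?_
  rw [Finset.sum_mul]
  refine Finset.sum_le_sum fun i _ => ?_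
  rw [hN.2.1, mul_comm]
  refine mul_le_mul_of_nonneg_left ?_ (hN.nonneg _)
  exact EuclideanSpace.norm_eq x ▸ by
    have := PiLp.norm_apply_le x i
    simpa [EuclideanSpace.norm_eq] using this

theorem IsNorm.sub_abs (hN : IsNorm N) (x y : EuclideanSpace ℝ (Fin n)) :
    |N x - N y| ≤ N (x - y) := by
  have h1 := hN.2.2 (x - y) y
  have h2 := hN.2.2 (y - x) x
  rw [sub_add_cancel] at h1 h2
  have h3 : N (y - x) = N (x - y) := by rw [← hN.neg, neg_sub]
  rw [abs_le]; constructor <;> linarith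

theorem IsNorm.cont (hN : IsNorm N) : Continuous N := by
  obtain ⟨C, hC, h⟩ := hN.le_norm
  refine (LipschitzWith.of_dist_le_mul (K := ⟨C, hC⟩) fun x y => ?_).continuous
  rw [Real.dist_eq, dist_eq_norm]
  exact (hN.sub_abs x y).trans (h _)

theorem IsNorm.ge_norm (hN : IsNorm N) : ∃ c : ℝ, 0 < c ∧ ∀ x, c * ‖x‖ ≤ N x := by
  rcases Nat.eq_zero_or_pos n with rfl | hn
  · refine ⟨1, one_pos, fun x => ?_⟩
    rw [Subsingleton.elim x 0]; simp [hN.zero]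
  have : Nonempty (Fin n) := ⟨⟨0, hn⟩⟩
  have hne : (sphere (0 : EuclideanSpace ℝ (Fin n)) 1).Nonempty :=
    NormedSpace.sphere_nonempty.2 zero_le_one
  obtain ⟨x0, hx0, hmin⟩ := (isCompact_sphere (0 : EuclideanSpace ℝ (Fin n)) 1).exists_isMinOn hne
    hN.cont.continuousOn
  have hx0' : x0 ≠ 0 := by
    rintro rfl; simp at hx0
  refine ⟨N x0, hN.pos hx0', fun x => ?_⟩
  rcases eq_or_ne x 0 with rfl | hx
  · simp [hN.zero]
  have hxn : 0 < ‖x‖ := norm_pos_iff.2 hx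
  have : N x0 ≤ N (‖x‖⁻¹ • x) := hmin (by
    simp [norm_smul, hxn.ne'])
  rw [hN.2.1, abs_of_pos (inv_pos.2 hxn)] at this
  rw [mul_comm]
  calc ‖x‖ * N x0 ≤ ‖x‖ * (‖x‖⁻¹ * N x) := by gcongr
    _ = N x := by field_simp

theorem IsNorm.compact (hN : IsNorm N) : IsCompact {x | N x ≤ 1} := by
  obtain ⟨c, hc, h⟩ := hN.ge_norm
  refine (isCompact_closedBall (0 : EuclideanSpace ℝ (Fin n)) c⁻¹).of_isClosed_subset
    (isClosed_le hN.cont continuous_const) fun x hx => ?_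
  rw [mem_closedBall_zero_iff]
  have := (h x).trans hx
  rw [← one_div, le_div_iff₀ hc]; linarith

theorem IsNorm.vol_pos (hN : IsNorm N) : 0 < volume {x | N x ≤ 1} := by
  have ho : IsOpen {x | N x < 1} := isOpen_lt hN.cont continuous_const
  have : 0 < volume {x | N x < 1} := ho.measure_pos _ ⟨0, by simp [hN.zero]⟩
  exact this.trans_le (measure_mono fun x (hx : N x < 1) => show N x ≤ 1 from hx.le)

theorem IsNorm.vol_lt_top (hN : IsNorm N) : volume {x | N x ≤ 1} < ⊤ := hN.compact.measure_lt_top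

end normfacts

structure Good {n : ℕ} {Y : Type u} [NormedAddCommGroup Y] [NormedSpace ℝ Y]
    (N : EuclideanSpace ℝ (Fin n) → ℝ) (L : ℝ) (f : EuclideanSpace ℝ (Fin n) → Y) : Prop where
  hN : IsNorm N
  hL0 : 0 ≤ L
  hcs : HasCompactSupport f
  lip : ∀ x y, ‖f x - f y‖ ≤ L * N (x - y)

section deriv
variable {n : ℕ} {Y : Type u} [NormedAddCommGroup Y] [NormedSpace ℝ Y]
  {N : EuclideanSpace ℝ (Fin n) → ℝ} {L : ℝ} {f : EuclideanSpace ℝ (Fin n) → Y}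

theorem Good.cont (hf : Good N L f) : Continuous f := by
  obtain ⟨C, hC, h⟩ := hf.hN.le_norm
  refine (LipschitzWith.of_dist_le_mul (K := ⟨L * C, mul_nonneg hf.hL0 hC⟩) fun x y => ?_).continuous
  rw [dist_eq_norm, dist_eq_norm]
  refine (hf.lip x y).trans ?_
  change _ ≤ L * C * ‖x - y‖
  rw [mul_assoc]
  exact mul_le_mul_of_nonneg_left (h _) hf.hL0

theorem Good.sm (hf : Good N L f) : StronglyMeasurable f := hf.cont.stronglyMeasurable

theorem Good.bdd (hf : Good N L f) : ∃ C, ∀ x, ‖f x‖ ≤ C :=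
  hf.hcs.exists_bound_of_continuous hf.cont

/-- difference quotients -/
def DQ (f : EuclideanSpace ℝ (Fin n) → Y) (w : EuclideanSpace ℝ (Fin n)) (k : ℕ)
    (x : EuclideanSpace ℝ (Fin n)) : Y :=
  ((k : ℝ) + 1) • (f (x + ((k : ℝ) + 1)⁻¹ • w) - f x)

theorem Good.dq_bdd (hf : Good N L f) (w : EuclideanSpace ℝ (Fin n)) (k : ℕ)
    (x : EuclideanSpace ℝ (Fin n)) : ‖DQ f w k x‖ ≤ L * N w := by
  have hk : (0 : ℝ) < (k : ℝ) + 1 := by positivity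
  unfold DQ
  rw [norm_smul, Real.norm_of_nonneg hk.le]
  have := hf.lip (x + ((k : ℝ) + 1)⁻¹ • w) x
  rw [add_sub_cancel_left, hf.hN.2.1, abs_of_pos (inv_pos.2 hk)] at this
  calc _ ≤ ((k : ℝ) + 1) * (L * (((k : ℝ) + 1)⁻¹ * N w)) := by gcongr
    _ = _ := by field_simp

theorem Good.dq_cont (hf : Good N L f) (w : EuclideanSpace ℝ (Fin n)) (k : ℕ) :
    Continuous (DQ f w k) := by
  have := hf.cont
  unfold DQ; fun_prop

theorem Good.dq_sm (hf : Good N L f) (w : EuclideanSpace ℝ (Fin n)) (k : ℕ) :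
    StronglyMeasurable (DQ f w k) := (hf.dq_cont w k).stronglyMeasurable

theorem Good.dq_heat (hf : Good N L f) (w : EuclideanSpace ℝ (Fin n)) (k : ℕ) {s : ℝ} (hs : 0 < s)
    (x : EuclideanSpace ℝ (Fin n)) : heat s (DQ f w k) x = DQ (heat s f) w k x := by
  obtain ⟨C, hC⟩ := hf.bdd
  unfold DQ
  have h1 := heat_sub (φ := fun y => f (y + ((k : ℝ) + 1)⁻¹ • w)) (ψ := f)
    (hf.sm.comp_measurable (by fun_prop)) (fun _ => hC _) hf.sm hC hs x
  have h2 : heat s (fun y => f (y + ((k : ℝ) + 1)⁻¹ • w)) x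
      = heat s f (x + ((k : ℝ) + 1)⁻¹ • w) := by
    unfold heat
    simp only [add_sub_right_comm]
  rw [← h2, ← h1]
  simp only [heat_eq hs]
  rw [integral_smul]

theorem hk_hasFDeriv (n : ℕ) (s : ℝ) (z : EuclideanSpace ℝ (Fin n)) :
    HasFDerivAt (heatKernel n s)
      ((-(heatKernel n s z) * (1 / (2 * s))) • innerSL ℝ z) z := by
  unfold heatKernel
  have h1 : HasFDerivAt (fun x : EuclideanSpace ℝ (Fin n) => ‖x‖ ^ 2) (2 • innerSL ℝ z) z :=
    (hasStrictFDerivAt_norm_sq z).hasFDerivAt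
  have h2 := ((h1.neg.mul_const (4 * s)⁻¹).exp).const_mul ((4 * Real.pi * s) ^ (-(n : ℝ) / 2))
  refine (h2.congr_fderiv ?_)
  ext v
  have e : -(‖z‖ ^ 2 * (s⁻¹ * 4⁻¹)) = -‖z‖ ^ 2 / (4 * s) := by
    rw [div_eq_mul_inv, mul_inv]; ring
  simp
  rw [e]
  ring

theorem hk_fderiv_bdd (n : ℕ) {s : ℝ} (hs : 0 < s) : ∃ C, ∀ z : EuclideanSpace ℝ (Fin n),
    ‖(-(heatKernel n s z) * (1 / (2 * s))) • innerSL ℝ z‖ ≤ C := by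
  refine ⟨(4 * Real.pi * s) ^ (-(n : ℝ) / 2) * (1 / (2 * s)) * (1 + 4 * s), fun z => ?_⟩
  rw [norm_smul, innerSL_apply_norm, norm_mul, norm_neg, Real.norm_of_nonneg (hk_nonneg n hs z),
    Real.norm_of_nonneg (by positivity)]
  unfold heatKernel
  have key : Real.exp (-‖z‖ ^ 2 / (4 * s)) * ‖z‖ ≤ 1 + 4 * s := by
    have h1 : ‖z‖ ≤ 1 + ‖z‖ ^ 2 := by nlinarith [sq_nonneg (‖z‖ - 1), sq_nonneg ‖z‖]
    have h2 : ‖z‖ ^ 2 / (4 * s) ≤ Real.exp (‖z‖ ^ 2 / (4 * s)) := by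
      linarith [Real.add_one_le_exp (‖z‖ ^ 2 / (4 * s))]
    have h3 : (1 : ℝ) ≤ Real.exp (‖z‖ ^ 2 / (4 * s)) := Real.one_le_exp (by positivity)
    have h4 : ‖z‖ ^ 2 ≤ 4 * s * Real.exp (‖z‖ ^ 2 / (4 * s)) := by
      rw [div_le_iff₀ (by positivity)] at h2; linarith
    rw [neg_div, Real.exp_neg, inv_mul_le_iff₀ (Real.exp_pos _)]
    nlinarith
  calc _ = (4 * Real.pi * s) ^ (-(n : ℝ) / 2) * (1 / (2 * s)) *
        (Real.exp (-‖z‖ ^ 2 / (4 * s)) * ‖z‖) := by ring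
    _ ≤ _ := by gcongr

theorem Good.diff [CompleteSpace Y] (hf : Good N L f) {s : ℝ} (hs : 0 < s) :
    Differentiable ℝ (heat s f) := by
  have e : heat s f = fun x => ∫ y, heatKernel n s (x - y) • f y := by
    ext x
    unfold heat
    rw [← integral_sub_left_eq_self _ volume x]
    simp
  obtain ⟨C, hC⟩ := hk_fderiv_bdd n hs
  have hfc := hf.cont
  have hkc := hk_cont n s
  have hfi : Integrable f := hfc.integrable_of_hasCompactSupport hf.hcs
  intro x0
  rw [e]
  refine (hasFDerivAt_integral_of_dominated_of_fderiv_le (μ := volume) (s := univ)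
    (F := fun x y => heatKernel n s (x - y) • f y)
    (F' := fun x y => ((-(heatKernel n s (x - y)) * (1 / (2 * s))) • innerSL ℝ (x - y)).smulRight (f y))
    (bound := fun y => C * ‖f y‖) Filter.univ_mem ?_ ?_ ?_ ?_ ?_ ?_).differentiableAt
  · refine Filter.Eventually.of_forall fun x => ?_
    have : Continuous fun y => heatKernel n s (x - y) • f y := by fun_prop
    exact this.aestronglyMeasurable
  · have : Continuous fun y => heatKernel n s (x0 - y) • f y := by fun_prop
    exact this.integrable_of_hasCompactSupport hf.hcs.smul_left
  · have h0 : SecondCountableTopologyEither (EuclideanSpace ℝ (Fin n))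
        (EuclideanSpace ℝ (Fin n) →L[ℝ] Y) := secondCountableTopologyEither_of_left _ _
    refine Continuous.aestronglyMeasurable ?_
    have h1 : Continuous fun y => (-(heatKernel n s (x0 - y)) * (1 / (2 * s))) • innerSL ℝ (x0 - y) := by
      have : Continuous fun y => innerSL ℝ (x0 - y) := (innerSL ℝ).continuous.comp (by fun_prop)
      fun_prop
    exact ((ContinuousLinearMap.smulRightL ℝ (EuclideanSpace ℝ (Fin n)) Y).continuous.comp h1).clm_apply hfc
  · refine Filter.Eventually.of_forall fun y x _ => ?_
    rw [ContinuousLinearMap.norm_smulRight_apply]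
    gcongr
    exact hC _
  · exact hfi.norm.const_mul C
  · refine Filter.Eventually.of_forall fun y x _ => ?_
    have h1 : HasFDerivAt (fun x => heatKernel n s (x - y)) _ x :=
      HasFDerivAt.comp (g := heatKernel n s) (f := fun x => x - y) x (hk_hasFDeriv n s (x - y))
        ((hasFDerivAt_id x).sub_const y)
    have h2 := h1.smul_const (f y)
    simpa using h2

/-- directional derivative of the heat evolute -/
def dh (f : EuclideanSpace ℝ (Fin n) → Y) (w : EuclideanSpace ℝ (Fin n)) (s : ℝ)
    (x : EuclideanSpace ℝ (Fin n)) : Y := fderiv ℝ (heat s f) x w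

theorem dq_tendsto {g : EuclideanSpace ℝ (Fin n) → Y} (hg : Differentiable ℝ g)
    (w x : EuclideanSpace ℝ (Fin n)) :
    Filter.Tendsto (fun k => DQ g w k x) Filter.atTop (nhds (fderiv ℝ g x w)) := by
  have h := (hg x).hasFDerivAt.hasLineDerivAt w
  unfold HasLineDerivAt at h
  rw [hasDerivAt_iff_tendsto_slope_zero] at h
  have h2 : Filter.Tendsto (fun k : ℕ => ((k : ℝ) + 1)⁻¹) Filter.atTop (nhdsWithin 0 {0}ᶜ) := by
    refine tendsto_nhdsWithin_iff.2 ⟨?_, Filter.Eventually.of_forall fun k => ?_⟩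
    · simpa using tendsto_one_div_add_atTop_nhds_zero_nat (𝕜 := ℝ)
    · have : (0 : ℝ) < (k : ℝ) + 1 := by positivity
      simpa using this.ne'
  refine (h.comp h2).congr fun k => ?_
  simp [DQ]

variable [CompleteSpace Y]

theorem Good.dh_tendsto (hf : Good N L f) (w x : EuclideanSpace ℝ (Fin n)) {s : ℝ} (hs : 0 < s) :
    Filter.Tendsto (fun k => heat s (DQ f w k) x) Filter.atTop (nhds (dh f w s x)) := by
  refine (dq_tendsto (hf.diff hs) w x).congr fun k => ?_
  rw [hf.dq_heat w k hs]

theorem Good.dh_bdd (hf : Good N L f) (w : EuclideanSpace ℝ (Fin n)) {s : ℝ} (hs : 0 < s)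
    (x : EuclideanSpace ℝ (Fin n)) : ‖dh f w s x‖ ≤ L * N w :=
  le_of_tendsto (hf.dh_tendsto w x hs).norm
    (Filter.Eventually.of_forall fun k => heat_norm_le (hf.dq_bdd w k) hs x)

theorem Good.dh_sm (hf : Good N L f) {P : Type*} [MeasurableSpace P] {a : P → ℝ}
    {b c : P → EuclideanSpace ℝ (Fin n)} (ha : Measurable a) (ha0 : ∀ p, 0 < a p)
    (hb : Measurable b) (hc : Measurable c) :
    StronglyMeasurable fun p => dh f (c p) (a p) (b p) := by
  refine stronglyMeasurable_of_tendsto Filter.atTop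
    (f := fun k p => heat (a p) (DQ f (c p) k) (b p)) (fun k => ?_) ?_
  · refine heat_sm (Φ := fun p => DQ f (c p) k) ha hb ?_
    have : Continuous fun p : EuclideanSpace ℝ (Fin n) × EuclideanSpace ℝ (Fin n) =>
        DQ f p.1 k p.2 := by
      have := hf.cont
      unfold DQ; fun_prop
    exact this.stronglyMeasurable.comp_measurable
      ((hc.comp measurable_fst).prodMk measurable_snd)
  · rw [tendsto_pi_nhds]
    exact fun p => hf.dh_tendsto _ _ (ha0 p)

theorem Good.dh_sm' (hf : Good N L f) (w : EuclideanSpace ℝ (Fin n)) {s : ℝ} (hs : 0 < s) :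
    StronglyMeasurable (dh f w s) :=
  hf.dh_sm (a := fun _ => s) (b := fun x => x) (c := fun _ => w) measurable_const (fun _ => hs)
    measurable_id measurable_const

theorem Good.dh_heat (hf : Good N L f) (w : EuclideanSpace ℝ (Fin n)) {s t : ℝ} (hs : 0 < s)
    (ht : 0 < t) (x : EuclideanSpace ℝ (Fin n)) :
    heat s (dh f w t) x = dh f w (s + t) x := by
  have := gm_prob n hs
  refine tendsto_nhds_unique ?_ (hf.dh_tendsto w x (add_pos hs ht))
  have : ∀ k, heat (s + t) (DQ f w k) x = heat s (heat t (DQ f w k)) x := fun k =>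
    (heat_heat (hf.dq_sm w k) (hf.dq_bdd w k) hs ht x).symm
  simp only [this, heat_eq hs]
  refine tendsto_integral_of_dominated_convergence (fun _ => L * N w) (fun k => ?_)
    (integrable_const _) (fun k => Filter.Eventually.of_forall fun z =>
      heat_norm_le (hf.dq_bdd w k) ht _)
    (Filter.Eventually.of_forall fun z => hf.dh_tendsto w _ ht)
  exact ((heat_cont (hf.dq_sm w k) (hf.dq_bdd w k) ht).comp
    (continuous_sub_left x)).aestronglyMeasurable

theorem Good.dh_cont (hf : Good N L f) (w : EuclideanSpace ℝ (Fin n)) {s : ℝ} (hs : 0 < s) :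
    Continuous (dh f w s) := by
  have h2 : 0 < s / 2 := by positivity
  have : dh f w s = heat (s / 2) (dh f w (s / 2)) := by
    ext x; rw [hf.dh_heat w h2 h2, add_halves]
  rw [this]
  exact heat_cont (hf.dh_sm' w h2) (hf.dh_bdd w h2) h2

/-- derivative along a line -/
theorem Good.dh_line (hf : Good N L f) (w x : EuclideanSpace ℝ (Fin n)) {s : ℝ} (hs : 0 < s)
    (r : ℝ) : HasDerivAt (fun r : ℝ => heat s f (x + r • w)) (dh f w s (x + r • w)) r := by
  have h1 : HasDerivAt (fun r : ℝ => x + r • w) w r := by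
    simpa using ((hasDerivAt_id r).smul_const w).const_add x
  exact ((hf.diff hs _).hasFDerivAt.comp_hasDerivAt r h1)

theorem Good.dh_ftc (hf : Good N L f) (w x : EuclideanSpace ℝ (Fin n)) {s : ℝ} (hs : 0 < s)
    (t : ℝ) : heat s f (x + t • w) - heat s f x = ∫ r in (0 : ℝ)..t, dh f w s (x + r • w) := by
  rw [intervalIntegral.integral_eq_sub_of_hasDerivAt (fun r _ => hf.dh_line w x hs r)]
  · simp
  · refine Continuous.intervalIntegrable ?_ _ _
    have := hf.dh_cont w hs
    fun_prop

end deriv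

theorem jensen_pow {Z : Type*} [MeasurableSpace Z] (ρ : Measure Z) [IsProbabilityMeasure ρ] {q : ℝ}
    (hq : 2 ≤ q) {φ : Z → ℝ≥0∞} (hφ : Measurable φ) :
    (∫⁻ z, φ z ∂ρ) ^ q ≤ ∫⁻ z, φ z ^ q ∂ρ := by
  have h := eLpNorm'_le_eLpNorm'_of_exponent_le (f := φ) one_pos (by linarith : (1:ℝ) ≤ q) ρ
    hφ.aestronglyMeasurable
  unfold eLpNorm' at h
  simp only [enorm_eq_self, ENNReal.rpow_one, div_one] at h
  have h2 := ENNReal.rpow_le_rpow h (by linarith : 0 ≤ q)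
  rwa [← ENNReal.rpow_mul, one_div_mul_cancel (by linarith), ENNReal.rpow_one] at h2

section walk
variable {n : ℕ} (ν : ℕ → Measure (EuclideanSpace ℝ (Fin n))) [∀ k, IsProbabilityMeasure (ν k)]

/-- the restriction to the first `k` coordinates -/
def rst (n k : ℕ) (ω : ℕ → EuclideanSpace ℝ (Fin n)) :
    (Finset.range k) → EuclideanSpace ℝ (Fin n) := fun i => ω i

/-- the partial sums -/
def psum {n : ℕ} (k : ℕ) (ω : ℕ → EuclideanSpace ℝ (Fin n)) : EuclideanSpace ℝ (Fin n) :=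
  ∑ i ∈ Finset.range k, ω i

theorem rst_meas (n k : ℕ) : Measurable (rst n k) := by
  unfold rst; fun_prop

theorem psum_meas (k : ℕ) : Measurable (psum (n := n) k) := by
  unfold psum; fun_prop

theorem psum_rst (k : ℕ) : psum (n := n) k = (fun ξ => ∑ i, ξ i) ∘ rst n k := by
  ext1 ω
  simp only [psum, rst, Function.comp]
  rw [← Finset.sum_coe_sort]

/-- the filtration -/
def wf (n : ℕ) : Filtration ℕ (inferInstance : MeasurableSpace (ℕ → EuclideanSpace ℝ (Fin n))) where
  seq k := MeasurableSpace.comap (rst n k) inferInstance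
  mono' := by
    intro i j hij
    have : rst n i = (fun ξ : (Finset.range j) → EuclideanSpace ℝ (Fin n) =>
        fun a : Finset.range i => ξ ⟨a, Finset.range_mono hij a.2⟩) ∘ rst n j := rfl
    change MeasurableSpace.comap (rst n i) _ ≤ MeasurableSpace.comap (rst n j) _
    rw [this, ← MeasurableSpace.comap_comp]
    refine MeasurableSpace.comap_mono ?_
    refine Measurable.comap_le ?_
    fun_prop
  le' k := (rst_meas n k).comap_le

theorem walk_law (k : ℕ) :
    (Measure.infinitePi ν).map (fun ω => (rst n k ω, ω k))
      = ((Measure.infinitePi ν).map (rst n k)).prod (ν k) := by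
  have h1 := ProbabilityTheory.iIndepFun_infinitePi (P := ν)
    (X := fun _ ω => ω) (fun _ => measurable_id)
  have h2 := h1.indepFun_finset (Finset.range k) {k} (by simp) (fun i => by fun_prop)
  have hmk : Measurable (fun ξ : ({k} : Finset ℕ) → EuclideanSpace ℝ (Fin n) =>
    ξ ⟨k, by simp⟩) := measurable_pi_apply _
  have h3 := h2.comp (φ := id) measurable_id hmk
  have h4 := (ProbabilityTheory.indepFun_iff_map_prod_eq_prod_map_map
    (Measurable.aemeasurable (rst_meas n k)) (Measurable.aemeasurable (by fun_prop))).1 h3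
  have h5 : (Measure.infinitePi ν).map (fun ω => ω k) = ν k := Measure.infinitePi_map_eval ν k
  rw [← h5]
  exact h4

theorem walk_lintegral (k : ℕ) {G : EuclideanSpace ℝ (Fin n) → EuclideanSpace ℝ (Fin n) → ℝ≥0∞}
    (hG : Measurable (Function.uncurry G)) :
    ∫⁻ ω, G (psum k ω) (ω k) ∂(Measure.infinitePi ν)
      = ∫⁻ ω, ∫⁻ z, G (psum k ω) z ∂(ν k) ∂(Measure.infinitePi ν) := by
  have hs : Measurable fun ξ : (Finset.range k) → EuclideanSpace ℝ (Fin n) => ∑ i, ξ i := by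
    fun_prop
  have hG2 : Measurable fun p : ((Finset.range k) → EuclideanSpace ℝ (Fin n)) ×
      EuclideanSpace ℝ (Fin n) => G (∑ i, p.1 i) p.2 :=
    hG.comp ((hs.comp measurable_fst).prodMk measurable_snd)
  have e1 : ∫⁻ ω, G (psum k ω) (ω k) ∂(Measure.infinitePi ν)
      = ∫⁻ p, G (∑ i, p.1 i) p.2 ∂((Measure.infinitePi ν).map (fun ω => (rst n k ω, ω k))) := by
    rw [lintegral_map hG2 ((rst_meas n k).prodMk (measurable_pi_apply k))]
    simp only [psum_rst, Function.comp]
  rw [e1, walk_law, lintegral_prod _ hG2.aemeasurable,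
    lintegral_map hG2.lintegral_prod_right' (rst_meas n k)]
  simp only [psum_rst, Function.comp]

variable {Y : Type u} [NormedAddCommGroup Y] [NormedSpace ℝ Y] [CompleteSpace Y]

theorem walk_martingale {g : ℕ → EuclideanSpace ℝ (Fin n) → Y} {C : ℝ}
    (hg : ∀ k, StronglyMeasurable (g k)) (hb : ∀ k x, ‖g k x‖ ≤ C)
    (hst : ∀ k x, g k x = ∫ z, g (k + 1) (x + z) ∂(ν k)) :
    Martingale (fun k ω => g k (psum k ω)) (wf n) (Measure.infinitePi ν) := by
  have hIntg : ∀ k, Integrable (fun ω => g k (psum k ω)) (Measure.infinitePi ν) := fun k =>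
    Integrable.of_bound ((hg k).comp_measurable (psum_meas k)).aestronglyMeasurable C
      (Filter.Eventually.of_forall fun ω => hb _ _)
  have hs : ∀ k, Measurable fun ξ : (Finset.range k) → EuclideanSpace ℝ (Fin n) => ∑ i, ξ i :=
    fun k => by fun_prop
  refine martingale_of_setIntegral_eq_succ (fun k => ?_) hIntg fun k s hsm => ?_
  · change StronglyMeasurable[MeasurableSpace.comap (rst n k) _] _
    simp only [psum_rst, Function.comp]
    exact ((hg k).comp_measurable (hs k)).comp_measurable (comap_measurable _)
  · obtain ⟨A, hA, rfl⟩ := hsm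
    have hm : MeasurableSet (rst n k ⁻¹' A) := rst_meas n k hA
    have i1 : StronglyMeasurable fun p : ((Finset.range k) → EuclideanSpace ℝ (Fin n)) ×
      EuclideanSpace ℝ (Fin n) => A.indicator (fun ξ => g (k + 1) ((∑ i, ξ i) + p.2)) p.1 := by
      have : (fun p : ((Finset.range k) → EuclideanSpace ℝ (Fin n)) ×
        EuclideanSpace ℝ (Fin n) => A.indicator (fun ξ => g (k + 1) ((∑ i, ξ i) + p.2)) p.1)
        = (Prod.fst ⁻¹' A).indicator (fun p => g (k + 1) ((∑ i, p.1 i) + p.2)) := by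
        ext p; rfl
      rw [this]
      refine StronglyMeasurable.indicator ?_ (measurable_fst hA)
      exact (hg _).comp_measurable (((hs k).comp measurable_fst).add measurable_snd)
    have e1 : ∫ ω in rst n k ⁻¹' A, g (k + 1) (psum (k + 1) ω) ∂(Measure.infinitePi ν)
        = ∫ p, A.indicator (fun ξ => g (k + 1) ((∑ i, ξ i) + p.2)) p.1
          ∂((Measure.infinitePi ν).map (fun ω => (rst n k ω, ω k))) := by
      rw [integral_map ((rst_meas n k).prodMk (measurable_pi_apply k)).aemeasurable
        i1.aestronglyMeasurable, ← integral_indicator hm]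
      refine integral_congr_ae (Filter.Eventually.of_forall fun ω => ?_)
      have : psum (k + 1) ω = (∑ i, rst n k ω i) + ω k := by
        have h := congrFun (psum_rst (n := n) k) ω
        simp only [Function.comp] at h
        rw [← h, psum, psum, Finset.sum_range_succ]
      simp only [indicator, this]; rfl
    have p1 : IsProbabilityMeasure ((Measure.infinitePi ν).map (rst n k)) :=
      Measure.isProbabilityMeasure_map (rst_meas n k).aemeasurable
    have i2 : Integrable (fun p : ((Finset.range k) → EuclideanSpace ℝ (Fin n)) ×
      EuclideanSpace ℝ (Fin n) => A.indicator (fun ξ => g (k + 1) ((∑ i, ξ i) + p.2)) p.1)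
      (((Measure.infinitePi ν).map (rst n k)).prod (ν k)) := by
      refine Integrable.of_bound i1.aestronglyMeasurable C (Filter.Eventually.of_forall fun p => ?_)
      exact (norm_indicator_le_norm_self _ _).trans (hb _ _)
    rw [e1, walk_law, integral_prod _ i2, integral_map (rst_meas n k).aemeasurable,
      ← integral_indicator hm]
    · refine integral_congr_ae (Filter.Eventually.of_forall fun ω => ?_)
      by_cases h : rst n k ω ∈ A
      · simp only [indicator, mem_preimage, h, if_true]
        rw [hst, psum_rst]; rfl
      · simp only [indicator, mem_preimage, h, if_false, integral_zero]
    · exact (i1.integral_prod_right' (ν := ν k)).aestronglyMeasurable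

end walk

section core
variable {n : ℕ} {Y : Type u} [NormedAddCommGroup Y] [NormedSpace ℝ Y] [CompleteSpace Y]

theorem heat_pow_le {q : ℝ} (hq : 2 ≤ q) {F : EuclideanSpace ℝ (Fin n) → Y}
    (hm : StronglyMeasurable F) {u : ℝ} (hu : 0 < u) (x : EuclideanSpace ℝ (Fin n)) :
    ‖heat u F x‖ₑ ^ q ≤ ∫⁻ z, ‖F (x - z)‖ₑ ^ q ∂(gm n u) := by
  have := gm_prob n hu
  refine (ENNReal.rpow_le_rpow (heat_enorm_le F hu x) (by linarith)).trans ?_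
  exact jensen_pow _ hq (hm.comp_measurable (by fun_prop)).enorm

theorem lintegral_conv_gm {φ : EuclideanSpace ℝ (Fin n) → ℝ≥0∞} (hφ : Measurable φ) {s t : ℝ}
    (hs : 0 < s) (ht : 0 < t) :
    ∫⁻ z, ∫⁻ y, φ (z + y) ∂(gm n t) ∂(gm n s) = ∫⁻ z, φ z ∂(gm n (s + t)) := by
  rw [← gm_conv n hs ht, Measure.lintegral_conv hφ]

theorem core {q : ℝ} (hq : 2 ≤ q) {m : ℝ} (hY : MartCotypeBound q Y m)
    {F : EuclideanSpace ℝ (Fin n) → Y} {C : ℝ} (hm : StronglyMeasurable F)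
    (hb : ∀ x, ‖F x‖ ≤ C) {r : ℝ} (hr : 0 < r) :
    ∑' k : ℕ, ∫⁻ x, ‖heat (r / 2 ^ (k + 1)) F x - heat (3 * (r / 2 ^ (k + 1))) F x‖ₑ ^ q
      ≤ ENNReal.ofReal m ^ q * ∫⁻ x, ‖F x‖ₑ ^ q := by
  set ρ : ℕ → ℝ := fun k => r / 2 ^ k with hρ
  have hρ0 : ∀ k, 0 < ρ k := fun k => by positivity
  have hρs : ∀ k, ρ (k + 1) + ρ (k + 1) = ρ k := fun k => by
    simp only [hρ, pow_succ]; field_simp; norm_num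
  set ν : ℕ → Measure (EuclideanSpace ℝ (Fin n)) := fun k => gm n (ρ (k + 1)) with hν
  have hνp : ∀ k, IsProbabilityMeasure (ν k) := fun k => gm_prob n (hρ0 _)
  have hFq : Measurable fun x => ‖F x‖ₑ ^ q := hm.enorm.pow_const q
  have hc : ∀ k, Continuous (heat (ρ k) F) := fun k => heat_cont hm hb (hρ0 k)
  -- the martingale for every `x`
  have mart : ∀ x, Martingale (fun k ω => heat (ρ k) F (x - psum k ω)) (wf n)
      (Measure.infinitePi ν) := fun x => by
    refine walk_martingale ν (g := fun k z => heat (ρ k) F (x - z)) (C := C)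
      (fun k => ((hc k).comp (continuous_sub_left x)).stronglyMeasurable)
      (fun k z => heat_norm_le hb (hρ0 k) _) (fun k z => ?_)
    rw [← hρs k, ← heat_heat hm hb (hρ0 _) (hρ0 _), heat_eq (hρ0 _)]
    simp only [hν, sub_sub]
  -- the bound
  have bnd : ∀ x k, ∫⁻ ω, (‖heat (ρ k) F (x - psum k ω)‖₊ : ℝ≥0∞) ^ q ∂(Measure.infinitePi ν)
      ≤ ∫⁻ z, ‖F (x - z)‖ₑ ^ q ∂(gm n (ρ 0)) := fun x k => by
    have step : ∀ k, ∫⁻ ω, ∫⁻ z, ‖F (x - psum k ω - z)‖ₑ ^ q ∂(gm n (ρ k)) ∂(Measure.infinitePi ν)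
        = ∫⁻ z, ‖F (x - z)‖ₑ ^ q ∂(gm n (ρ 0)) := by
      intro k
      induction k with
      | zero => simp [psum]
      | succ k ih =>
        rw [← ih]
        have hG : Measurable fun p : EuclideanSpace ℝ (Fin n) × EuclideanSpace ℝ (Fin n) =>
            ∫⁻ z, ‖F (x - (p.1 + p.2) - z)‖ₑ ^ q ∂(gm n (ρ (k + 1))) := by
          refine Measurable.lintegral_prod_right' (ν := gm n (ρ (k + 1)))
            (f := fun p : (EuclideanSpace ℝ (Fin n) × EuclideanSpace ℝ (Fin n)) ×
              EuclideanSpace ℝ (Fin n) => ‖F (x - (p.1.1 + p.1.2) - p.2)‖ₑ ^ q) ?_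
          exact hFq.comp (by fun_prop)
        have h := walk_lintegral ν k (G := fun a b =>
          ∫⁻ z, ‖F (x - (a + b) - z)‖ₑ ^ q ∂(gm n (ρ (k + 1)))) hG
        have e : ∀ ω, psum (n := n) (k + 1) ω = psum k ω + ω k := fun ω => by
          rw [psum, psum, Finset.sum_range_succ]
        simp only [e]
        rw [h]
        refine lintegral_congr fun ω => ?_
        have h2 := lintegral_conv_gm (n := n) (φ := fun z => ‖F (x - psum k ω - z)‖ₑ ^ q)
          (hFq.comp (by fun_prop)) (hρ0 (k + 1)) (hρ0 (k + 1))
        rw [hρs] at h2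
        rw [← h2]
        simp only [hν, sub_sub, add_assoc]
    rw [← step k]
    exact lintegral_mono fun ω => heat_pow_le hq hm (hρ0 k) _
  have key : ∀ x, ∑' k : ℕ, ∫⁻ ω, ‖heat (ρ (k + 1)) F (x - psum (k + 1) ω)
        - heat (ρ k) F (x - psum k ω)‖ₑ ^ q ∂(Measure.infinitePi ν)
      ≤ ENNReal.ofReal m ^ q * ∫⁻ z, ‖F (x - z)‖ₑ ^ q ∂(gm n (ρ 0)) := fun x =>
    hY _ _ _ _ (mart x) _ (bnd x)
  have meas : ∀ k, Measurable fun p : EuclideanSpace ℝ (Fin n) × (ℕ → EuclideanSpace ℝ (Fin n)) =>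
      ‖heat (ρ (k + 1)) F (p.1 - psum (k + 1) p.2) - heat (ρ k) F (p.1 - psum k p.2)‖ₑ ^ q := by
    intro k
    have a1 := (hc (k + 1)).stronglyMeasurable.comp_measurable
      (g := fun p : EuclideanSpace ℝ (Fin n) × (ℕ → EuclideanSpace ℝ (Fin n)) =>
        p.1 - psum (k + 1) p.2) (measurable_fst.sub ((psum_meas _).comp measurable_snd))
    have a2 := (hc k).stronglyMeasurable.comp_measurable
      (g := fun p : EuclideanSpace ℝ (Fin n) × (ℕ → EuclideanSpace ℝ (Fin n)) =>
        p.1 - psum k p.2) (measurable_fst.sub ((psum_meas _).comp measurable_snd))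
    exact (a1.sub a2).enorm.pow_const q
  calc _ ≤ ∑' k : ℕ, ∫⁻ x, ∫⁻ ω, ‖heat (ρ (k + 1)) F (x - psum (k + 1) ω)
        - heat (ρ k) F (x - psum k ω)‖ₑ ^ q ∂(Measure.infinitePi ν) := by
        refine ENNReal.tsum_le_tsum fun k => ?_
        have hk := hρ0 (k + 1)
        have := gm_prob n hk
        have hc3 : Continuous (heat (3 * ρ (k + 1)) F) := heat_cont hm hb (by positivity)
        have p1 : ∀ x, ‖heat (ρ (k + 1)) F x - heat (3 * ρ (k + 1)) F x‖ₑ ^ q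
            ≤ ∫⁻ z, ‖heat (ρ (k + 1)) F x - heat (ρ k) F (x + z)‖ₑ ^ q ∂(gm n (ρ (k + 1))) := by
          intro x
          have e1 : heat (ρ (k + 1)) F x - heat (3 * ρ (k + 1)) F x
              = ∫ z, (heat (ρ (k + 1)) F x - heat (ρ k) F (x + z)) ∂(gm n (ρ (k + 1))) := by
            have e3 : 3 * ρ (k + 1) = ρ (k + 1) + ρ k := by rw [← hρs k]; ring
            have i := bdd_integrable (hc k).stronglyMeasurable (fun y => heat_norm_le hb (hρ0 k) y)
              hk x
            have i' : Integrable (fun z => heat (ρ k) F (x + z)) (gm n (ρ (k + 1))) := by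
              refine Integrable.of_bound (C := C) ?_
                (Filter.Eventually.of_forall fun z => heat_norm_le hb (hρ0 k) _)
              exact ((hc k).comp (continuous_const_add x)).aestronglyMeasurable
            rw [integral_sub (integrable_const _) i', integral_const]
            simp only [measureReal_def, measure_univ, ENNReal.toReal_one, one_smul]
            have hneg : ∫ z, heat (ρ k) F (x + z) ∂(gm n (ρ (k + 1)))
                = ∫ z, heat (ρ k) F (x - z) ∂(gm n (ρ (k + 1))) := by
              conv_lhs => rw [← gm_neg n hk]
              rw [integral_map (by fun_prop)]
              · simp [sub_eq_add_neg]
              · exact ((hc k).comp (continuous_const_add x)).aestronglyMeasurable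
            rw [e3, ← heat_heat hm hb hk (hρ0 k), heat_eq hk (heat (ρ k) F), hneg]
          rw [e1]
          refine (ENNReal.rpow_le_rpow (enorm_integral_le_lintegral_enorm _) (by linarith)).trans ?_
          refine jensen_pow _ hq ?_
          have := hc k
          have : Continuous fun z => heat (ρ (k + 1)) F x - heat (ρ k) F (x + z) := by fun_prop
          exact this.stronglyMeasurable.enorm
        have mz : Measurable fun p : EuclideanSpace ℝ (Fin n) × EuclideanSpace ℝ (Fin n) =>
            ‖heat (ρ (k + 1)) F p.1 - heat (ρ k) F (p.1 + p.2)‖ₑ ^ q := by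
          have h1 := hc k
          have h2 := hc (k + 1)
          have : Continuous fun p : EuclideanSpace ℝ (Fin n) × EuclideanSpace ℝ (Fin n) =>
            heat (ρ (k + 1)) F p.1 - heat (ρ k) F (p.1 + p.2) := by fun_prop
          exact this.stronglyMeasurable.enorm.pow_const q
        refine (lintegral_mono p1).trans ?_
        refine (lintegral_lintegral_swap mz.aemeasurable).trans_le ?_
        refine le_of_le_of_eq ?_ (lintegral_lintegral_swap (meas k).aemeasurable).symm
        have h5 : (Measure.infinitePi ν).map (fun ω => ω k) = gm n (ρ (k + 1)) :=
          Measure.infinitePi_map_eval ν k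
        rw [← h5, lintegral_map mz.lintegral_prod_left' (measurable_pi_apply k)]
        refine lintegral_mono fun ω => ?_
        rw [← lintegral_sub_right_eq_self (fun x => ‖heat (ρ (k + 1)) F x
          - heat (ρ k) F (x + ω k)‖ₑ ^ q) (psum (k + 1) ω)]
        refine le_of_eq (lintegral_congr fun x => ?_)
        have e : psum (n := n) (k + 1) ω = psum k ω + ω k := by
          rw [psum, psum, Finset.sum_range_succ]
        have e2 : x - psum (k + 1) ω + ω k = x - psum k ω := by rw [e]; abel
        rw [e2]
    _ = ∫⁻ x, ∑' k : ℕ, ∫⁻ ω, ‖heat (ρ (k + 1)) F (x - psum (k + 1) ω)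
        - heat (ρ k) F (x - psum k ω)‖ₑ ^ q ∂(Measure.infinitePi ν) := by
        rw [lintegral_tsum]
        exact fun k => ((meas k).lintegral_prod_right').aemeasurable
    _ ≤ ∫⁻ x, ENNReal.ofReal m ^ q * ∫⁻ z, ‖F (x - z)‖ₑ ^ q ∂(gm n (ρ 0)) := lintegral_mono key
    _ = ENNReal.ofReal m ^ q * ∫⁻ x, ‖F x‖ₑ ^ q := by
        have hp : Measurable fun p : EuclideanSpace ℝ (Fin n) × EuclideanSpace ℝ (Fin n) =>
          ‖F (p.1 - p.2)‖ₑ ^ q := hFq.comp (by fun_prop)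
        have := gm_prob n (hρ0 0)
        rw [lintegral_const_mul _ hp.lintegral_prod_right', lintegral_lintegral_swap hp.aemeasurable]
        simp only [lintegral_sub_right_eq_self (fun x => ‖F x‖ₑ ^ q), lintegral_const, measure_univ,
          mul_one]

end core

theorem tsum_int_le {a : ℤ → ℝ≥0∞} {B : ℝ≥0∞} (h : ∀ J : ℤ, ∑' k : ℕ, a (J - (k + 1)) ≤ B) :
    ∑' i, a i ≤ B := by
  refine ENNReal.summable.tsum_le_of_sum_le fun s => ?_
  obtain ⟨J, hJ⟩ : ∃ J : ℤ, ∀ i ∈ s, i < J := by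
    obtain ⟨J, hJ⟩ := s.exists_le
    exact ⟨J + 1, fun i hi => by have := hJ i hi; omega⟩
  refine le_trans ?_ (h J)
  have e : ∑ i ∈ s, a i = ∑ k ∈ s.image (fun i => (J - 1 - i).toNat), a (J - (k + 1)) := by
    rw [Finset.sum_image]
    · refine Finset.sum_congr rfl fun i hi => ?_
      have := hJ i hi
      congr 1; omega
    · intro i hi j hj hij
      have := hJ i hi
      have := hJ j hj
      simp only at hij
      omega
  rw [e]
  exact ENNReal.sum_le_tsum _

theorem lintegral_dyadic {Φ : ℝ → ℝ≥0∞} (hΦ : Measurable Φ) {B : ℝ≥0∞}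
    (h : ∀ r > 0, ∑' k : ℕ, Φ (Real.log (r / 2 ^ (k + 1))) ≤ B) : ∫⁻ y, Φ y ≤ B := by
  have hc : 0 < Real.log 2 := Real.log_pos (by norm_num)
  set c := Real.log 2 with hcd
  have h1 : ∫⁻ y, Φ y = ∑' i : ℤ, ∫⁻ y in Ioc (i • c) ((i + 1) • c), Φ y := by
    rw [← lintegral_iUnion (fun i => measurableSet_Ioc) (pairwise_disjoint_Ioc_zsmul c),
      iUnion_Ioc_zsmul hc, Measure.restrict_univ]
  have h2 : ∀ i : ℤ, ∫⁻ y in Ioc (i • c) ((i + 1) • c), Φ y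
      = ∫⁻ y in Ioc 0 c, Φ (y + i • c) := by
    intro i
    have := (measurePreserving_add_right (volume : Measure ℝ) (i • c)).setLIntegral_comp_preimage_emb
      (measurableEmbedding_addRight _) Φ (Ioc (i • c) ((i + 1) • c))
    rw [← this]
    congr 2
    ext y; simp [add_smul, add_comm]
  rw [h1]
  simp only [h2]
  have hmi : ∀ i : ℤ, Measurable fun y => Φ (y + i • c) := fun i => hΦ.comp (by fun_prop)
  rw [← lintegral_tsum fun i => (hmi i).aemeasurable]
  calc ∫⁻ y in Ioc 0 c, ∑' i : ℤ, Φ (y + i • c) ≤ ∫⁻ y in Ioc 0 c, B := by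
        refine lintegral_mono fun y => tsum_int_le fun J => ?_
        refine le_of_eq_of_le (tsum_congr fun k => ?_) (h (Real.exp (y + J • c)) (Real.exp_pos _))
        rw [Real.log_div (Real.exp_pos _).ne' (by positivity), Real.log_exp, Real.log_pow]
        congr 1
        push_cast
        simp only [zsmul_eq_mul]; push_cast; ring
    _ ≤ B := by
        rw [lintegral_const, Measure.restrict_apply_univ, Real.volume_Ioc, sub_zero]
        calc B * ENNReal.ofReal c ≤ B * 1 := by
              gcongr
              rw [ENNReal.ofReal_le_one]
              have := Real.log_two_lt_d9; linarith
          _ = B := mul_one B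

theorem lintegral_affine_le {Φ : ℝ → ℝ≥0∞} (hΦ : Measurable Φ) (b : ℝ) :
    ∫⁻ y, Φ (2 * y + b) ≤ ∫⁻ y, Φ y := by
  have h1 : ∫⁻ y, Φ (2 * y + b) = ∫⁻ y, Φ (y + b) ∂(Measure.map (fun y : ℝ => 2 * y) volume) := by
    have h0 : Measurable fun y => Φ (y + b) := hΦ.comp (by fun_prop)
    have h00 : Measurable fun y : ℝ => 2 * y := by fun_prop
    rw [lintegral_map h0 h00]
  rw [h1, Real.map_volume_mul_left two_ne_zero, lintegral_smul_measure,
    lintegral_add_right_eq_self Φ b, smul_eq_mul]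
  calc _ ≤ 1 * ∫⁻ y, Φ y := by
        gcongr
        rw [ENNReal.ofReal_le_one, abs_of_pos (by norm_num)]; norm_num
    _ = _ := one_mul _

theorem nq_prod {A B : Type*} [MeasurableSpace A] [MeasurableSpace B] (μ : Measure A)
    (ν : Measure B) [SFinite ν] {q : ℝ} (hq : 2 ≤ q) {φ : A × B → ℝ≥0∞} (hφ : Measurable φ) :
    nq q (μ.prod ν) φ = nq q μ fun a => nq q ν fun b => φ (a, b) := by
  conv_lhs => rw [nq]
  conv_rhs => rw [nq]
  simp only [nq_rpow hq]
  rw [lintegral_prod _ (hφ.pow_const q).aemeasurable]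

theorem nq_meas {A B : Type*} [MeasurableSpace A] [MeasurableSpace B]
    (ν : Measure B) [SFinite ν] {q : ℝ} {φ : A → B → ℝ≥0∞}
    (hφ : Measurable (Function.uncurry φ)) :
    Measurable fun a => nq q ν (φ a) := by
  unfold nq
  have : Measurable fun a => ∫⁻ b, φ a b ^ q ∂ν := (hφ.pow_const q).lintegral_prod_right'
  exact this.pow_const _

section LP
variable {n : ℕ} {Y : Type u} [NormedAddCommGroup Y] [NormedSpace ℝ Y] [CompleteSpace Y]
  {N : EuclideanSpace ℝ (Fin n) → ℝ} {L : ℝ} {f : EuclideanSpace ℝ (Fin n) → Y}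

theorem LP0 {q : ℝ} (hq : 2 ≤ q) {m : ℝ} (hY : MartCotypeBound q Y m)
    {F : EuclideanSpace ℝ (Fin n) → Y} {C : ℝ} (hm : StronglyMeasurable F)
    (hb : ∀ x, ‖F x‖ ≤ C) :
    ∫⁻ y : ℝ, ∫⁻ x, ‖heat (Real.exp y) F x - heat (3 * Real.exp y) F x‖ₑ ^ q
      ≤ ENNReal.ofReal m ^ q * ∫⁻ x, ‖F x‖ₑ ^ q := by
  refine lintegral_dyadic ?_ fun r hr => ?_
  · have h : Measurable fun p : ℝ × EuclideanSpace ℝ (Fin n) =>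
        ‖heat (Real.exp p.1) F p.2 - heat (3 * Real.exp p.1) F p.2‖ₑ ^ q :=
      ((heat_sm' (by fun_prop) (by fun_prop) hm).sub
        (heat_sm' (by fun_prop) (by fun_prop) hm)).enorm.pow_const q
    exact h.lintegral_prod_right'
  · refine le_of_eq_of_le (tsum_congr fun k => ?_) (core hq hY hm hb hr)
    rw [Real.exp_log (by positivity)]

/-- the `L_q` norm of `∂_w (H_u - H_{3u}) f` -/
def Gq (q : ℝ) (f : EuclideanSpace ℝ (Fin n) → Y) (w : EuclideanSpace ℝ (Fin n)) (u : ℝ) : ℝ≥0∞ :=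
  nq q volume fun x => ‖dh f w u x - dh f w (3 * u) x‖ₑ

/-- the basic constant -/
def AA (q m L : ℝ) (f : EuclideanSpace ℝ (Fin n) → Y) : ℝ≥0∞ :=
  ENNReal.ofReal (m * L) * (2 * volume (tsupport f)) ^ (1 / q)

theorem Good.dq_int (hf : Good N L f) {q : ℝ} (hq : 2 ≤ q) (w : EuclideanSpace ℝ (Fin n)) (k : ℕ) :
    ∫⁻ x, ‖DQ f w k x‖ₑ ^ q ≤ ENNReal.ofReal (L * N w) ^ q * (2 * volume (tsupport f)) := by
  set a := ((k : ℝ) + 1)⁻¹ • w with ha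
  have hms : MeasurableSet (tsupport f) := (isClosed_tsupport f).measurableSet
  set S : Set (EuclideanSpace ℝ (Fin n)) := (fun x => x + a) ⁻¹' (tsupport f) ∪ tsupport f with hS
  have hSm : MeasurableSet S := (measurable_add_const a hms).union hms
  have hvol : volume S ≤ 2 * volume (tsupport f) := by
    refine (measure_union_le _ _).trans ?_
    rw [measure_preimage_add_right, two_mul]
  calc ∫⁻ x, ‖DQ f w k x‖ₑ ^ q ≤ ∫⁻ x, S.indicator (fun _ => ENNReal.ofReal (L * N w) ^ q) x := by
        refine lintegral_mono fun x => ?_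
        by_cases hx : x ∈ S
        · rw [indicator_of_mem hx, ← ofReal_norm]
          gcongr
          exact hf.dq_bdd w k x
        · have h1 : x + a ∉ tsupport f := fun h => hx (Or.inl h)
          have h2 : x ∉ tsupport f := fun h => hx (Or.inr h)
          have h3 : DQ f w k x = 0 := by
            rw [DQ, image_eq_zero_of_notMem_tsupport h1, image_eq_zero_of_notMem_tsupport h2]
            simp
          rw [h3, enorm_zero, ENNReal.zero_rpow_of_pos (by linarith)]
          exact zero_le
    _ = ENNReal.ofReal (L * N w) ^ q * volume S := lintegral_indicator_const hSm _
    _ ≤ _ := by gcongr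

set_option maxHeartbeats 1000000 in
theorem Good.LP1 (hf : Good N L f) {q : ℝ} (hq : 2 ≤ q) {m : ℝ} (hm0 : 0 ≤ m)
    (hY : MartCotypeBound q Y m) (w : EuclideanSpace ℝ (Fin n)) :
    ∫⁻ y : ℝ, Gq q f w (Real.exp y) ^ q ≤ (AA q m L f * ENNReal.ofReal (N w)) ^ q := by
  have hq0 : 0 ≤ q := by linarith
  have hA : (AA q m L f * ENNReal.ofReal (N w)) ^ q
      = ENNReal.ofReal m ^ q * (ENNReal.ofReal (L * N w) ^ q * (2 * volume (tsupport f))) := by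
    unfold AA
    rw [ENNReal.mul_rpow_of_nonneg _ _ hq0, ENNReal.mul_rpow_of_nonneg _ _ hq0,
      ← ENNReal.rpow_mul, one_div_mul_cancel (by linarith), ENNReal.rpow_one,
      ENNReal.ofReal_mul hm0, ENNReal.ofReal_mul hf.hL0, ENNReal.mul_rpow_of_nonneg _ _ hq0,
      ENNReal.mul_rpow_of_nonneg _ _ hq0]
    ring
  rw [hA]
  unfold Gq
  simp only [nq_rpow hq]
  set T : ℕ → ℝ × EuclideanSpace ℝ (Fin n) → ℝ≥0∞ := fun k p =>
    ‖heat (Real.exp p.1) (DQ f w k) p.2 - heat (3 * Real.exp p.1) (DQ f w k) p.2‖ₑ ^ q with hT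
  have hTm : ∀ k, Measurable (T k) := fun k =>
    ((heat_sm' (a := fun p : ℝ × EuclideanSpace ℝ (Fin n) => Real.exp p.1) (b := fun p => p.2)
      (by fun_prop) (by fun_prop) (hf.dq_sm w k)).sub
      (heat_sm' (a := fun p : ℝ × EuclideanSpace ℝ (Fin n) => 3 * Real.exp p.1) (b := fun p => p.2)
      (by fun_prop) (by fun_prop) (hf.dq_sm w k))).enorm.pow_const q
  have hlim : ∀ p : ℝ × EuclideanSpace ℝ (Fin n),
      Filter.Tendsto (fun k => T k p) Filter.atTop
      (nhds (‖dh f w (Real.exp p.1) p.2 - dh f w (3 * Real.exp p.1) p.2‖ₑ ^ q)) := fun p => by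
    have h1 := hf.dh_tendsto w p.2 (Real.exp_pos p.1)
    have h2 := hf.dh_tendsto w p.2 (by positivity : 0 < 3 * Real.exp p.1)
    exact ((ENNReal.continuous_rpow_const).tendsto _).comp ((h1.sub h2).enorm)
  have hmeas : Measurable fun p : ℝ × EuclideanSpace ℝ (Fin n) =>
      ‖dh f w (Real.exp p.1) p.2 - dh f w (3 * Real.exp p.1) p.2‖ₑ ^ q :=
    ((hf.dh_sm (a := fun p : ℝ × EuclideanSpace ℝ (Fin n) => Real.exp p.1) (c := fun _ => w)
      (by fun_prop) (fun p => Real.exp_pos p.1) measurable_snd measurable_const).sub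
      (hf.dh_sm (a := fun p : ℝ × EuclideanSpace ℝ (Fin n) => 3 * Real.exp p.1) (c := fun _ => w)
      (by fun_prop) (fun p => by positivity) measurable_snd measurable_const)).enorm.pow_const q
  rw [← lintegral_prod (μ := volume) (ν := volume) (fun p : ℝ × EuclideanSpace ℝ (Fin n) =>
    ‖dh f w (Real.exp p.1) p.2 - dh f w (3 * Real.exp p.1) p.2‖ₑ ^ q) hmeas.aemeasurable]
  calc _ = ∫⁻ p, Filter.liminf (fun k => T k p) Filter.atTop ∂(volume.prod volume) :=
        lintegral_congr fun p => (hlim p).liminf_eq.symm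
    _ ≤ Filter.liminf (fun k => ∫⁻ p, T k p ∂(volume.prod volume)) Filter.atTop :=
        lintegral_liminf_le hTm
    _ ≤ Filter.liminf (fun k : ℕ => ENNReal.ofReal m ^ q *
          (ENNReal.ofReal (L * N w) ^ q * (2 * volume (tsupport f)))) Filter.atTop := by
        refine Filter.liminf_le_liminf (Filter.Eventually.of_forall fun k => ?_)
        rw [lintegral_prod _ (hTm k).aemeasurable]
        refine (LP0 hq hY (hf.dq_sm w k) (hf.dq_bdd w k)).trans ?_
        gcongr
        exact hf.dq_int hq w k
    _ = _ := Filter.liminf_const _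

theorem Good.Gq_meas (hf : Good N L f) {q : ℝ} {P : Type*} [MeasurableSpace P] {a : P → ℝ}
    {c : P → EuclideanSpace ℝ (Fin n)} (ha : Measurable a) (ha0 : ∀ p, 0 < a p)
    (hc : Measurable c) : Measurable fun p => Gq q f (c p) (a p) := by
  unfold Gq
  refine nq_meas (φ := fun p x => ‖dh f (c p) (a p) x - dh f (c p) (3 * a p) x‖ₑ) volume ?_
  exact ((hf.dh_sm (P := P × EuclideanSpace ℝ (Fin n)) (ha.comp measurable_fst) (fun p => ha0 p.1)
    measurable_snd (hc.comp measurable_fst)).sub (hf.dh_sm (P := P × EuclideanSpace ℝ (Fin n))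
    ((ha.const_mul 3).comp measurable_fst) (fun p => mul_pos three_pos (ha0 p.1))
    measurable_snd (hc.comp measurable_fst))).enorm

theorem Good.LP2 (hf : Good N L f) {q : ℝ} (hq : 2 ≤ q) {m : ℝ} (hm0 : 0 ≤ m)
    (hY : MartCotypeBound q Y m) (w : EuclideanSpace ℝ (Fin n)) {c : ℝ} (hc : 0 < c) :
    nq q volume (fun y : ℝ => Gq q f w (c * Real.exp (2 * y))) ≤ AA q m L f * ENNReal.ofReal (N w) := by
  have hq0 : 0 < q := by linarith
  unfold nq
  rw [one_div, ENNReal.rpow_inv_le_iff hq0]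
  refine le_trans ?_ (hf.LP1 hq hm0 hY w)
  refine le_of_eq_of_le ?_ (lintegral_affine_le (Φ := fun y => Gq q f w (Real.exp y) ^ q)
    ((hf.Gq_meas (by fun_prop) (fun _ => Real.exp_pos _) measurable_const).pow_const q) (Real.log c))
  refine lintegral_congr fun y => ?_
  rw [Real.exp_add, Real.exp_log hc, mul_comm]

end LP

theorem enorm_le_tsum_of_tele {Y : Type*} [NormedAddCommGroup Y] {a : Y} {b r : ℕ → Y}
    (h : ∀ K, a = ∑ k ∈ Finset.range K, b k + r K)
    (hr : Filter.Tendsto (fun K => ‖r K‖) Filter.atTop (nhds 0)) : ‖a‖ₑ ≤ ∑' k, ‖b k‖ₑ := by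
  have h1 : ∀ K, ‖a‖ₑ ≤ ∑' k, ‖b k‖ₑ + ‖r K‖ₑ := fun K => by
    conv_lhs => rw [h K]
    refine (enorm_add_le _ _).trans ?_
    gcongr
    exact (enorm_sum_le _ _).trans (ENNReal.sum_le_tsum _)
  have h2 : Filter.Tendsto (fun K => ‖r K‖ₑ) Filter.atTop (nhds 0) := by
    have := (ENNReal.continuous_ofReal.tendsto 0).comp hr
    simpa [Function.comp_def, ofReal_norm] using this
  have h3 : Filter.Tendsto (fun K => ∑' k, ‖b k‖ₑ + ‖r K‖ₑ) Filter.atTop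
      (nhds (∑' k, ‖b k‖ₑ + 0)) := tendsto_const_nhds.add h2
  rw [add_zero] at h3
  exact ge_of_tendsto' h3 h1

theorem tsum_geom_le {C : ℝ} (hC : 0 ≤ C) {a : ℕ → ℝ} (ha : ∀ k, a k ≤ C * (3 / 4) ^ k) (A : ℝ≥0∞) :
    ∑' k, ENNReal.ofReal (a k) * A ≤ ENNReal.ofReal (4 * C) * A := by
  rw [ENNReal.tsum_mul_right]
  gcongr
  have hs : Summable fun k : ℕ => C * (3 / 4 : ℝ) ^ k :=
    (summable_geometric_of_lt_one (by norm_num) (by norm_num)).mul_left C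
  calc ∑' k, ENNReal.ofReal (a k) ≤ ∑' k, ENNReal.ofReal (C * (3 / 4) ^ k) :=
        ENNReal.tsum_le_tsum fun k => ENNReal.ofReal_le_ofReal (ha k)
    _ = ENNReal.ofReal (∑' k, C * (3 / 4) ^ k) :=
        (ENNReal.ofReal_tsum_of_nonneg (fun k => by positivity) hs).symm
    _ = ENNReal.ofReal (4 * C) := by
        rw [tsum_mul_left, tsum_geometric_of_lt_one (by norm_num) (by norm_num)]
        congr 1; ring

theorem sqrt_two_pow_inv (k : ℕ) : 1 / Real.sqrt (2 ^ k) ≤ (3 / 4 : ℝ) ^ k := by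
  rw [div_le_iff₀ (by positivity)]
  have h : Real.sqrt (2 ^ k) = (Real.sqrt 2) ^ k := by
    rw [Real.sqrt_eq_iff_eq_sq (by positivity) (by positivity), ← pow_mul, mul_comm, pow_mul,
      Real.sq_sqrt (by norm_num)]
  rw [h, ← mul_pow]
  apply one_le_pow₀
  have : (4 / 3 : ℝ) ≤ Real.sqrt 2 := Real.le_sqrt_of_sq_le (by norm_num)
  linarith

theorem tendsto_inv_sqrt_two_pow {s : ℝ} (hs : 0 < s) (C : ℝ) :
    Filter.Tendsto (fun K : ℕ => C / Real.sqrt (2 ^ K * s)) Filter.atTop (nhds 0) := by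
  refine Filter.Tendsto.div_atTop tendsto_const_nhds ?_
  refine Real.tendsto_sqrt_atTop.comp ?_
  exact (tendsto_pow_atTop_atTop_of_one_lt (by norm_num)).atTop_mul_const hs

section A
variable {n : ℕ} {Y : Type u} [NormedAddCommGroup Y] [NormedSpace ℝ Y] [CompleteSpace Y]
  {N : EuclideanSpace ℝ (Fin n) → ℝ} {L : ℝ} {f : EuclideanSpace ℝ (Fin n) → Y}

theorem Good.Dh_sm (hf : Good N L f) (w : EuclideanSpace ℝ (Fin n)) {u : ℝ} (hu : 0 < u) :
    StronglyMeasurable fun x => dh f w u x - dh f w (3 * u) x :=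
  (hf.dh_sm' w hu).sub (hf.dh_sm' w (by positivity))

theorem Good.Dh_bdd (hf : Good N L f) (w : EuclideanSpace ℝ (Fin n)) {u : ℝ} (hu : 0 < u)
    (x : EuclideanSpace ℝ (Fin n)) :
    ‖dh f w u x - dh f w (3 * u) x‖ ≤ L * N w + L * N w :=
  (norm_sub_le _ _).trans (add_le_add (hf.dh_bdd w hu x) (hf.dh_bdd w (by positivity) x))

theorem Good.Dh_heat (hf : Good N L f) (w : EuclideanSpace ℝ (Fin n)) {u v : ℝ} (hu : 0 < u)
    (hv : 0 < v) (x : EuclideanSpace ℝ (Fin n)) :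
    heat v (fun x => dh f w u x - dh f w (3 * u) x) x = dh f w (v + u) x - dh f w (v + 3 * u) x := by
  rw [heat_sub (hf.dh_sm' w hu) (hf.dh_bdd w hu) (hf.dh_sm' w (by positivity))
    (hf.dh_bdd w (by positivity)) hv, hf.dh_heat w hv hu, hf.dh_heat w hv (by positivity)]

theorem Good.dh_diff_le (hf : Good N L f) (w v : EuclideanSpace ℝ (Fin n)) {s : ℝ} (hs : 0 < s)
    (x : EuclideanSpace ℝ (Fin n)) :
    ‖dh f w s (x + v) - dh f w s x‖ₑ ≤ ∑' k : ℕ,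
      ‖heat (2 ^ k * (s / 2)) (fun x => dh f w (2 ^ k * (s / 2)) x - dh f w (3 * (2 ^ k * (s / 2))) x) (x + v)
        - heat (2 ^ k * (s / 2)) (fun x => dh f w (2 ^ k * (s / 2)) x - dh f w (3 * (2 ^ k * (s / 2))) x) x‖ₑ := by
  refine enorm_le_tsum_of_tele (r := fun K => dh f w (2 ^ K * s) (x + v) - dh f w (2 ^ K * s) x)
    (fun K => ?_) ?_
  · induction K with
    | zero => simp
    | succ K ih =>
      rw [Finset.sum_range_succ, ih]
      have hu : 0 < 2 ^ K * (s / 2) := by positivity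
      rw [hf.Dh_heat w hu hu, hf.Dh_heat w hu hu,
        show 2 ^ K * (s / 2) + 2 ^ K * (s / 2) = 2 ^ K * s by ring,
        show 2 ^ K * (s / 2) + 3 * (2 ^ K * (s / 2)) = 2 ^ (K + 1) * s by ring]
      abel
  · refine squeeze_zero (fun _ => norm_nonneg _) (fun K => ?_)
      (tendsto_inv_sqrt_two_pow (half_pos hs) (L * N w * (3 * ‖v‖)))
    have hu : 0 < 2 ^ K * (s / 2) := by positivity
    have h := heat_lip (hf.dh_sm' w hu) (hf.dh_bdd w hu) hu x v
    rw [hf.dh_heat w hu hu, hf.dh_heat w hu hu,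
      show 2 ^ K * (s / 2) + 2 ^ K * (s / 2) = 2 ^ K * s by ring] at h
    rwa [mul_div_assoc]

theorem Good.nq_dh_diff (hf : Good N L f) {q : ℝ} (hq : 2 ≤ q) (w v : EuclideanSpace ℝ (Fin n))
    {s : ℝ} (hs : 0 < s) :
    nq q volume (fun x => ‖dh f w s (x + v) - dh f w s x‖ₑ) ≤ ∑' k : ℕ,
      ENNReal.ofReal (3 * ‖v‖ / Real.sqrt (2 ^ k * (s / 2))) * Gq q f w (2 ^ k * (s / 2)) := by
  refine (nq_mono hq _ (hf.dh_diff_le w v hs)).trans ?_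
  refine (nq_tsum _ hq fun k => ?_).trans (ENNReal.tsum_le_tsum fun k => ?_)
  · have hu : 0 < 2 ^ k * (s / 2) := by positivity
    exact ((heat_sm' measurable_const (measurable_add_const v) (hf.Dh_sm w hu)).sub
      (heat_sm' measurable_const measurable_id (hf.Dh_sm w hu))).enorm
  · have hu : 0 < 2 ^ k * (s / 2) := by positivity
    exact nq_heat_diff hq (hf.Dh_sm w hu) (hf.Dh_bdd w hu) hu v

/-- Taylor remainder -/
def RR (f : EuclideanSpace ℝ (Fin n) → Y) (s t : ℝ) (w x : EuclideanSpace ℝ (Fin n)) : Y :=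
  heat s f (x + t • w) - heat s f x - t • dh f w s x

theorem Good.RR_le (hf : Good N L f) {s t : ℝ} (hs : 0 < s) (ht : 0 < t)
    (w x : EuclideanSpace ℝ (Fin n)) :
    ‖RR f s t w x‖ₑ ≤ ∫⁻ r in Ioc 0 t, ‖dh f w s (x + r • w) - dh f w s x‖ₑ := by
  have hc : Continuous fun r : ℝ => dh f w s (x + r • w) := (hf.dh_cont w hs).comp (by fun_prop)
  have : RR f s t w x = ∫ r in (0 : ℝ)..t, (dh f w s (x + r • w) - dh f w s x) := by
    rw [intervalIntegral.integral_sub (hc.intervalIntegrable _ _) (by simp), ← hf.dh_ftc w x hs,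
      intervalIntegral.integral_const, sub_zero]
    rfl
  rw [this, intervalIntegral.integral_of_le ht.le]
  exact enorm_integral_le_lintegral_enorm _

theorem Good.nq_RR (hf : Good N L f) {q : ℝ} (hq : 2 ≤ q) {s t : ℝ} (hs : 0 < s) (ht : 0 < t)
    (w : EuclideanSpace ℝ (Fin n)) :
    nq q volume (fun x => ‖RR f s t w x‖ₑ) ≤ ENNReal.ofReal t * ∑' k : ℕ,
      ENNReal.ofReal (3 * (t * ‖w‖) / Real.sqrt (2 ^ k * (s / 2))) * Gq q f w (2 ^ k * (s / 2)) := by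
  refine (nq_mono hq _ (hf.RR_le hs ht w)).trans ?_
  refine (nq_lintegral _ _ hq (T := fun r x => ‖dh f w s (x + r • w) - dh f w s x‖ₑ) ?_).trans ?_
  · exact ((hf.dh_sm (P := ℝ × EuclideanSpace ℝ (Fin n)) (a := fun _ => s) (c := fun _ => w)
      measurable_const (fun _ => hs) (b := fun p => p.2 + p.1 • w) (by fun_prop) measurable_const).sub
      (hf.dh_sm (P := ℝ × EuclideanSpace ℝ (Fin n)) (a := fun _ => s) (c := fun _ => w)
      measurable_const (fun _ => hs) (b := fun p => p.2) (by fun_prop) measurable_const)).enorm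
  · set B := ∑' k : ℕ,
      ENNReal.ofReal (3 * (t * ‖w‖) / Real.sqrt (2 ^ k * (s / 2))) * Gq q f w (2 ^ k * (s / 2)) with hB
    calc _ ≤ ∫⁻ r in Ioc 0 t, B := by
          refine setLIntegral_mono measurable_const fun r hr => ?_
          refine (hf.nq_dh_diff hq w (r • w) hs).trans ?_
          refine ENNReal.tsum_le_tsum fun k => ?_
          rw [norm_smul, Real.norm_of_nonneg hr.1.le]
          gcongr
          exact hr.2
      _ = _ := by
          rw [lintegral_const, Measure.restrict_apply_univ, Real.volume_Ioc, sub_zero, mul_comm]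

theorem Good.A_main (hf : Good N L f) {q : ℝ} (hq : 2 ≤ q) {m : ℝ} (hm0 : 0 ≤ m)
    (hY : MartCotypeBound q Y m) (w : EuclideanSpace ℝ (Fin n)) {γ : ℝ} (hγ : 0 < γ) :
    nq q volume (fun y : ℝ => nq q volume fun x => ENNReal.ofReal (Real.exp (-y)) *
      ‖RR f (γ * Real.exp (2 * y)) (Real.exp y) w x‖ₑ)
      ≤ ENNReal.ofReal (4 * (6 * ‖w‖ / Real.sqrt γ)) * (AA q m L f * ENNReal.ofReal (N w)) := by
  have hb : ∀ y : ℝ, nq q volume (fun x => ENNReal.ofReal (Real.exp (-y)) *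
      ‖RR f (γ * Real.exp (2 * y)) (Real.exp y) w x‖ₑ) ≤ ∑' k : ℕ,
      ENNReal.ofReal (3 * ‖w‖ / Real.sqrt (2 ^ k * (γ / 2))) *
        Gq q f w (2 ^ k * (γ / 2) * Real.exp (2 * y)) := by
    intro y
    have hs : 0 < γ * Real.exp (2 * y) := by positivity
    have hm : Measurable fun x => ‖RR f (γ * Real.exp (2 * y)) (Real.exp y) w x‖ₑ :=
      (((heat_sm' measurable_const (measurable_add_const _) hf.sm).sub
        (heat_sm' measurable_const measurable_id hf.sm)).sub
        ((hf.dh_sm' w hs).const_smul _)).enorm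
    rw [nq_const_mul hq _ _ hm]
    calc _ ≤ ENNReal.ofReal (Real.exp (-y)) * (ENNReal.ofReal (Real.exp y) * ∑' k : ℕ,
          ENNReal.ofReal (3 * (Real.exp y * ‖w‖) / Real.sqrt (2 ^ k * (γ * Real.exp (2 * y) / 2))) *
            Gq q f w (2 ^ k * (γ * Real.exp (2 * y) / 2))) := by
          gcongr
          exact hf.nq_RR hq hs (Real.exp_pos y) w
      _ = _ := by
          rw [← mul_assoc, ← ENNReal.ofReal_mul (Real.exp_pos _).le, ← Real.exp_add, neg_add_cancel,
            Real.exp_zero, ENNReal.ofReal_one, one_mul]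
          refine tsum_congr fun k => ?_
          have e1 : 2 ^ k * (γ * Real.exp (2 * y) / 2) = 2 ^ k * (γ / 2) * Real.exp (2 * y) := by ring
          have e2 : Real.sqrt (2 ^ k * (γ / 2) * Real.exp (2 * y))
              = Real.sqrt (2 ^ k * (γ / 2)) * Real.exp y := by
            rw [Real.sqrt_mul (by positivity)]
            congr 1
            rw [two_mul, Real.exp_add, Real.sqrt_mul_self (Real.exp_pos y).le]
          rw [e1, e2]
          congr 2
          have := (Real.exp_pos y).ne'
          field_simp
  refine (nq_mono hq _ hb).trans ?_
  have hGm : ∀ k : ℕ, Measurable fun y : ℝ => Gq q f w (2 ^ k * (γ / 2) * Real.exp (2 * y)) := fun k =>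
    hf.Gq_meas (by fun_prop) (fun y => by positivity) measurable_const
  refine (nq_tsum _ hq fun k => (hGm k).const_mul _).trans ?_
  calc _ ≤ ∑' k : ℕ, ENNReal.ofReal (3 * ‖w‖ / Real.sqrt (2 ^ k * (γ / 2))) *
          (AA q m L f * ENNReal.ofReal (N w)) := by
        refine ENNReal.tsum_le_tsum fun k => ?_
        rw [nq_const_mul hq _ _ (hGm k)]
        gcongr
        exact hf.LP2 hq hm0 hY w (by positivity)
    _ ≤ _ := by
        refine tsum_geom_le (by positivity) (fun k => ?_) _
        have h1 := sqrt_two_pow_inv k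
        rw [Real.sqrt_mul (by positivity), Real.sqrt_div hγ.le]
        have h2 : Real.sqrt 2 ≤ 2 := by
          rw [Real.sqrt_le_left (by norm_num)]; norm_num
        have h3 : 0 < Real.sqrt γ := Real.sqrt_pos.2 hγ
        calc 3 * ‖w‖ / (Real.sqrt (2 ^ k) * (Real.sqrt γ / Real.sqrt 2))
            = 3 * Real.sqrt 2 * ‖w‖ / Real.sqrt γ * (1 / Real.sqrt (2 ^ k)) := by
              field_simp
          _ ≤ 3 * 2 * ‖w‖ / Real.sqrt γ * (3 / 4) ^ k := by gcongr
          _ = _ := by ring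

end A

theorem hk_mom {n : ℕ} (hn : 0 < n) (z : EuclideanSpace ℝ (Fin n)) :
    heatKernel n 1 z * ‖z‖ ≤ 8 * Real.sqrt n * heatKernel n (1 - 1 / (2 * (n : ℝ)))⁻¹ z := by
  have hn' : (1 : ℝ) ≤ n := by exact_mod_cast hn
  have hn0 : (0 : ℝ) < n := by linarith
  set a : ℝ := 1 - 1 / (2 * (n : ℝ)) with ha
  have ha0 : 1 / 2 ≤ a := by
    have : 1 / (2 * (n : ℝ)) ≤ 1 / 2 := by
      apply one_div_le_one_div_of_le <;> linarith
    rw [ha]; linarith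
  have ha1 : a ≤ 1 := by
    have : 0 ≤ 1 / (2 * (n : ℝ)) := by positivity
    rw [ha]; linarith
  have hap : 0 < a := by linarith
  have hpow : 1 / 2 ≤ a ^ n := by
    have h := one_add_mul_le_pow (a := -(1 / (2 * (n : ℝ)))) (by linarith) n
    have e : 1 + (n : ℝ) * -(1 / (2 * (n : ℝ))) = 1 / 2 := by field_simp; ring
    rw [e] at h
    exact h
  have hpow2 : 1 / 2 ≤ a ^ ((n : ℝ) / 2) := by
    calc (1 / 2 : ℝ) ≤ a ^ n := hpow
      _ = a ^ (n : ℝ) := (Real.rpow_natCast a n).symm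
      _ ≤ a ^ ((n : ℝ) / 2) := Real.rpow_le_rpow_of_exponent_ge hap ha1 (by linarith)
  unfold heatKernel
  have e1 : (4 * Real.pi * a⁻¹) ^ (-(n : ℝ) / 2) = (4 * Real.pi) ^ (-(n : ℝ) / 2) * a ^ ((n : ℝ) / 2) := by
    rw [Real.mul_rpow (by positivity) (by positivity), Real.inv_rpow hap.le, ← Real.rpow_neg hap.le]
    congr 2; ring
  have e2 : Real.exp (-‖z‖ ^ 2 / (4 * a⁻¹)) = Real.exp (-‖z‖ ^ 2 / 4) * Real.exp (‖z‖ ^ 2 / (8 * n)) := by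
    rw [← Real.exp_add]
    congr 1
    rw [ha]
    field_simp
    ring
  have e3 : ‖z‖ ≤ 4 * Real.sqrt n * Real.exp (‖z‖ ^ 2 / (8 * n)) := by
    have h1 := Real.add_one_le_exp (‖z‖ ^ 2 / (8 * n))
    have h2 : 0 < Real.sqrt n := Real.sqrt_pos.2 hn0
    have h3 : Real.sqrt n * Real.sqrt n = n := Real.mul_self_sqrt hn0.le
    calc ‖z‖ ≤ 4 * Real.sqrt n * (‖z‖ ^ 2 / (8 * n) + 1) := by
          have e : 4 * Real.sqrt n * (‖z‖ ^ 2 / (8 * n) + 1)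
              = ‖z‖ ^ 2 / (2 * Real.sqrt n) + 4 * Real.sqrt n := by
            have h4 : ‖z‖ ^ 2 / (8 * n) = ‖z‖ ^ 2 / (8 * (Real.sqrt n * Real.sqrt n)) := by rw [h3]
            rw [h4]
            field_simp
            ring
          rw [e, ← sub_nonneg]
          have : ‖z‖ ^ 2 / (2 * Real.sqrt n) + 4 * Real.sqrt n - ‖z‖
            = ((‖z‖ - Real.sqrt n) ^ 2 + 7 * (Real.sqrt n) ^ 2) / (2 * Real.sqrt n) := by
            field_simp; ring
          rw [this]; positivity
      _ ≤ _ := by gcongr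
  rw [e1, e2, mul_one, mul_one]
  calc (4 * Real.pi) ^ (-(n : ℝ) / 2) * Real.exp (-‖z‖ ^ 2 / 4) * ‖z‖
      ≤ (4 * Real.pi) ^ (-(n : ℝ) / 2) * Real.exp (-‖z‖ ^ 2 / 4) *
        (4 * Real.sqrt n * Real.exp (‖z‖ ^ 2 / (8 * n))) := by gcongr
    _ = 8 * Real.sqrt n * ((4 * Real.pi) ^ (-(n : ℝ) / 2) * (1 / 2)
        * (Real.exp (-‖z‖ ^ 2 / 4) * Real.exp (‖z‖ ^ 2 / (8 * n)))) := by ring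
    _ ≤ _ := by gcongr

theorem gm_lintegral {n : ℕ} {φ : EuclideanSpace ℝ (Fin n) → ℝ≥0∞} (hφ : Measurable φ) :
    ∫⁻ z, φ z ∂gm n 1 = ∫⁻ z, ENNReal.ofReal (heatKernel n 1 z) * φ z := by
  rw [gm, lintegral_withDensity_eq_lintegral_mul _ (hk_cont n 1).measurable.ennreal_ofReal hφ]
  rfl

theorem gm_norm {n : ℕ} (hn : 0 < n) :
    ∫⁻ z, ENNReal.ofReal ‖z‖ ∂gm n 1 ≤ ENNReal.ofReal (8 * Real.sqrt n) := by
  have ht : 0 < (1 - 1 / (2 * (n : ℝ)))⁻¹ := by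
    have hn' : (1 : ℝ) ≤ n := by exact_mod_cast hn
    rw [inv_pos, sub_pos, div_lt_one (by positivity)]; linarith
  rw [gm_lintegral (by fun_prop)]
  calc _ ≤ ∫⁻ z, ENNReal.ofReal (8 * Real.sqrt n) *
          ENNReal.ofReal (heatKernel n (1 - 1 / (2 * (n : ℝ)))⁻¹ z) := by
        refine lintegral_mono fun z => ?_
        rw [← ENNReal.ofReal_mul (hk_nonneg n one_pos z), ← ENNReal.ofReal_mul (by positivity)]
        exact ENNReal.ofReal_le_ofReal (hk_mom hn z)
    _ = _ := by
        have h1 : ∫⁻ z, ENNReal.ofReal (heatKernel n (1 - 1 / (2 * (n : ℝ)))⁻¹ z) = 1 := by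
          have := (gm_prob n ht).measure_univ
          rwa [gm, withDensity_apply _ MeasurableSet.univ, Measure.restrict_univ] at this
        rw [lintegral_const_mul _ (hk_cont n _).measurable.ennreal_ofReal, h1, mul_one]

theorem polar {n : ℕ} (hn : 0 < n) {F : EuclideanSpace ℝ (Fin n) → ℝ} (hF : Continuous F)
    (hF0 : ∀ x, 0 ≤ F x)
    (hh : ∀ (r : ℝ) x, 0 < r → F (r • x) = r * F x) :
    ∫⁻ z, ENNReal.ofReal (F z) ∂gm n 1 =
      (∫⁻ σ : sphere (0 : EuclideanSpace ℝ (Fin n)) 1, ENNReal.ofReal (F σ)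
        ∂((volume : Measure (EuclideanSpace ℝ (Fin n))).toSphere)) *
      ∫⁻ r : Ioi (0 : ℝ), ENNReal.ofReal ((4 * Real.pi * 1) ^ (-(n : ℝ) / 2) *
          Real.exp (-(r : ℝ) ^ 2 / (4 * 1)) * r)
        ∂(Measure.volumeIoiPow (Module.finrank ℝ (EuclideanSpace ℝ (Fin n)) - 1)) := by
  have : Nonempty (Fin n) := ⟨⟨0, hn⟩⟩
  rw [gm_lintegral hF.measurable.ennreal_ofReal]
  rw [← lintegral_prod_mul (by fun_prop) (by fun_prop)]
  rw [← (Measure.measurePreserving_homeomorphUnitSphereProd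
    (volume : Measure (EuclideanSpace ℝ (Fin n)))).lintegral_comp_emb
    (homeomorphUnitSphereProd _).measurableEmbedding]
  rw [← restrict_compl_singleton (μ := (volume : Measure (EuclideanSpace ℝ (Fin n)))) 0,
    ← lintegral_subtype_comap (measurableSet_singleton _).compl, restrict_compl_singleton]
  refine lintegral_congr fun x => ?_
  have hx : 0 < ‖(x : EuclideanSpace ℝ (Fin n))‖ := norm_pos_iff.2 x.2
  rw [homeomorphUnitSphereProd_apply_fst_coe, homeomorphUnitSphereProd_apply_snd_coe,
    hh _ _ (inv_pos.2 hx), ← ENNReal.ofReal_mul (hk_nonneg n one_pos _),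
    ← ENNReal.ofReal_mul (mul_nonneg (inv_pos.2 hx).le (hF0 _))]
  congr 1
  unfold heatKernel
  field_simp

theorem IsNorm.sph_int {n : ℕ} {N : EuclideanSpace ℝ (Fin n) → ℝ} (hN : IsNorm N) :
    Integrable (fun σ : sphere (0 : EuclideanSpace ℝ (Fin n)) 1 => N σ)
      ((volume : Measure (EuclideanSpace ℝ (Fin n))).toSphere) :=
  (hN.cont.comp continuous_subtype_val).integrable_of_hasCompactSupport
    (HasCompactSupport.of_compactSpace _)

theorem sph_pos {n : ℕ} (hn : 0 < n) :
    0 < (volume : Measure (EuclideanSpace ℝ (Fin n))).toSphere.real univ := by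
  have : Nonempty (Fin n) := ⟨⟨0, hn⟩⟩
  rw [measureReal_def, ENNReal.toReal_pos_iff]
  refine ⟨?_, measure_lt_top _ _⟩
  rw [pos_iff_ne_zero, Ne, Measure.measure_univ_eq_zero]
  exact Measure.toSphere_ne_zero _

theorem IsNorm.MX_eq {n : ℕ} (hn : 0 < n) {N : EuclideanSpace ℝ (Fin n) → ℝ} (hN : IsNorm N) :
    ENNReal.ofReal (MX N) = ((volume : Measure (EuclideanSpace ℝ (Fin n))).toSphere univ)⁻¹ *
      ∫⁻ σ : sphere (0 : EuclideanSpace ℝ (Fin n)) 1, ENNReal.ofReal (N σ)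
        ∂((volume : Measure (EuclideanSpace ℝ (Fin n))).toSphere) := by
  rw [MX, average_eq, smul_eq_mul, ENNReal.ofReal_mul (by positivity),
    ENNReal.ofReal_inv_of_pos (sph_pos hn), ofReal_measureReal,
    ofReal_integral_eq_lintegral_ofReal hN.sph_int (Filter.Eventually.of_forall fun σ => hN.nonneg _)]

theorem IsNorm.MX_pos {n : ℕ} (hn : 0 < n) {N : EuclideanSpace ℝ (Fin n) → ℝ} (hN : IsNorm N) :
    0 < MX N := by
  obtain ⟨c, hc, h⟩ := hN.ge_norm
  rw [MX, average_eq, smul_eq_mul]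
  refine mul_pos (inv_pos.2 (sph_pos hn)) ?_
  have h1 : ∫ σ : sphere (0 : EuclideanSpace ℝ (Fin n)) 1, c
      ∂((volume : Measure (EuclideanSpace ℝ (Fin n))).toSphere) ≤
      ∫ σ : sphere (0 : EuclideanSpace ℝ (Fin n)) 1, N σ
      ∂((volume : Measure (EuclideanSpace ℝ (Fin n))).toSphere) := by
    refine integral_mono (integrable_const c) hN.sph_int fun σ => ?_
    have := h σ
    rwa [norm_eq_of_mem_sphere, mul_one] at this
  refine lt_of_lt_of_le ?_ h1
  rw [integral_const, smul_eq_mul]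
  exact mul_pos (sph_pos hn) hc

theorem IsNorm.gm_N {n : ℕ} (hn : 0 < n) {N : EuclideanSpace ℝ (Fin n) → ℝ} (hN : IsNorm N) :
    ∫⁻ z, ENNReal.ofReal (N z) ∂gm n 1 ≤ ENNReal.ofReal (8 * Real.sqrt n * MX N) := by
  have : Nonempty (Fin n) := ⟨⟨0, hn⟩⟩
  have h1 := polar hn hN.cont hN.nonneg (fun r x hr => by rw [hN.2.1, abs_of_pos hr])
  have h2 := polar hn continuous_norm (fun x => norm_nonneg x)
    (fun r x hr => by rw [norm_smul, Real.norm_of_nonneg hr.le])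
  have h3 := gm_norm hn
  rw [h1, ENNReal.ofReal_mul (by positivity), hN.MX_eq hn]
  simp only [norm_eq_of_mem_sphere, ENNReal.ofReal_one, lintegral_const, one_mul] at h2
  rw [h2] at h3
  have h4 : (volume : Measure (EuclideanSpace ℝ (Fin n))).toSphere univ ≠ 0 := by
    rw [Ne, Measure.measure_univ_eq_zero]
    exact Measure.toSphere_ne_zero _
  have h5 : (volume : Measure (EuclideanSpace ℝ (Fin n))).toSphere univ ≠ ⊤ := measure_ne_top _ _
  generalize (volume : Measure (EuclideanSpace ℝ (Fin n))).toSphere univ = V at *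
  generalize (∫⁻ r : Ioi (0 : ℝ), ENNReal.ofReal ((4 * Real.pi * 1) ^ (-(n : ℝ) / 2) *
          Real.exp (-(r : ℝ) ^ 2 / (4 * 1)) * r)
        ∂(Measure.volumeIoiPow (Module.finrank ℝ (EuclideanSpace ℝ (Fin n)) - 1))) = R at *
  generalize (∫⁻ σ : sphere (0 : EuclideanSpace ℝ (Fin n)) 1, ENNReal.ofReal (N σ)
        ∂((volume : Measure (EuclideanSpace ℝ (Fin n))).toSphere)) = S at *
  calc S * R = (V * R) * (V⁻¹ * S) := by
        rw [show V * R * (V⁻¹ * S) = (V * V⁻¹) * (S * R) by ring, ENNReal.mul_inv_cancel h4 h5, one_mul]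
    _ ≤ _ := by gcongr

theorem sqrt_diff_le {u v : ℝ} (hu : 0 < u) (hv : 0 ≤ v) :
    Real.sqrt (u + v) - Real.sqrt u ≤ v / (2 * Real.sqrt u) := by
  have h1 : 0 < Real.sqrt u := Real.sqrt_pos.2 hu
  rw [sub_le_iff_le_add, Real.sqrt_le_left (by positivity)]
  have h2 : Real.sqrt u ^ 2 = u := Real.sq_sqrt hu.le
  have : (v / (2 * Real.sqrt u) + Real.sqrt u) ^ 2 = u + v + (v / (2 * Real.sqrt u)) ^ 2 := by
    rw [add_sq, h2]
    field_simp
    ring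
  rw [this]
  have := sq_nonneg (v / (2 * Real.sqrt u))
  linarith

section B
variable {n : ℕ} {Y : Type u} [NormedAddCommGroup Y] [NormedSpace ℝ Y] [CompleteSpace Y]
  {N : EuclideanSpace ℝ (Fin n) → ℝ} {L : ℝ} {f : EuclideanSpace ℝ (Fin n) → Y}

theorem heat_diff_time {F : EuclideanSpace ℝ (Fin n) → Y} {C : ℝ} (hm : StronglyMeasurable F)
    (hb : ∀ x, ‖F x‖ ≤ C) {u v : ℝ} (hu : 0 < u) (hv : 0 < v) (x : EuclideanSpace ℝ (Fin n)) :
    ‖heat u F x - heat v F x‖ₑ ≤ ∫⁻ z, ‖F (x - Real.sqrt u • z) - F (x - Real.sqrt v • z)‖ₑ ∂gm n 1 := by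
  have := gm_prob n one_pos
  have hi : ∀ a : ℝ, Integrable (fun z => F (x - a • z)) (gm n 1) := fun a =>
    Integrable.of_bound (hm.comp_measurable (by fun_prop)).aestronglyMeasurable C
      (Filter.Eventually.of_forall fun z => hb _)
  rw [heat_scale hm hu, heat_scale hm hv, ← integral_sub (hi _) (hi _)]
  exact enorm_integral_le_lintegral_enorm _

theorem Good.time_lip (hf : Good N L f) (hn : 0 < n) {u v : ℝ} (hu : 0 < u) (hv : 0 ≤ v)
    (x : EuclideanSpace ℝ (Fin n)) :
    ‖heat u f x - heat (u + v) f x‖ ≤ L * (v / (2 * Real.sqrt u)) * (8 * Real.sqrt n * MX N) := by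
  obtain ⟨C, hb⟩ := hf.bdd
  have hM := (hf.hN.MX_pos hn).le
  have hL := hf.hL0
  have h0 : 0 ≤ L * (v / (2 * Real.sqrt u)) := by positivity
  have h1 : ‖heat u f x - heat (u + v) f x‖ₑ ≤
      ENNReal.ofReal (L * (v / (2 * Real.sqrt u)) * (8 * Real.sqrt n * MX N)) := by
    refine (heat_diff_time hf.sm hb hu (by linarith) x).trans ?_
    rw [ENNReal.ofReal_mul h0]
    calc _ ≤ ∫⁻ z, ENNReal.ofReal (L * (v / (2 * Real.sqrt u))) * ENNReal.ofReal (N z) ∂gm n 1 := by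
          refine lintegral_mono fun z => ?_
          rw [← ofReal_norm, ← ENNReal.ofReal_mul h0]
          refine ENNReal.ofReal_le_ofReal ((hf.lip _ _).trans ?_)
          rw [show x - Real.sqrt u • z - (x - Real.sqrt (u + v) • z)
            = (Real.sqrt (u + v) - Real.sqrt u) • z by rw [sub_smul]; abel, hf.hN.2.1,
            abs_of_nonneg (sub_nonneg.2 (Real.sqrt_le_sqrt (by linarith))), mul_assoc]
          have := hf.hN.nonneg z
          gcongr
          exact sqrt_diff_le hu hv
      _ ≤ _ := by
          rw [lintegral_const_mul _ hf.hN.cont.measurable.ennreal_ofReal]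
          gcongr
          exact hf.hN.gm_N hn
  rw [← ofReal_norm, ENNReal.ofReal_le_ofReal_iff (by positivity)] at h1
  exact h1

theorem Good.time_zero (hf : Good N L f) (hn : 0 < n) {u : ℝ} (hu : 0 < u)
    (x : EuclideanSpace ℝ (Fin n)) :
    ‖f x - heat u f x‖ ≤ L * Real.sqrt u * (8 * Real.sqrt n * MX N) := by
  obtain ⟨C, hb⟩ := hf.bdd
  have hM := (hf.hN.MX_pos hn).le
  have hL := hf.hL0
  have := gm_prob n one_pos
  have hi : ∀ a : ℝ, Integrable (fun z => f (x - a • z)) (gm n 1) := fun a =>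
    Integrable.of_bound (hf.sm.comp_measurable (by fun_prop)).aestronglyMeasurable C
      (Filter.Eventually.of_forall fun z => hb _)
  have h0 : 0 ≤ L * Real.sqrt u := by positivity
  have h1 : ‖f x - heat u f x‖ₑ ≤
      ENNReal.ofReal (L * Real.sqrt u * (8 * Real.sqrt n * MX N)) := by
    have e : f x - heat u f x = ∫ z, (f x - f (x - Real.sqrt u • z)) ∂gm n 1 := by
      rw [integral_sub (integrable_const _) (hi _), ← heat_scale hf.sm hu]
      simp
    rw [e]
    refine (enorm_integral_le_lintegral_enorm _).trans ?_
    rw [ENNReal.ofReal_mul h0]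
    calc _ ≤ ∫⁻ z, ENNReal.ofReal (L * Real.sqrt u) * ENNReal.ofReal (N z) ∂gm n 1 := by
          refine lintegral_mono fun z => ?_
          rw [← ofReal_norm, ← ENNReal.ofReal_mul h0]
          refine ENNReal.ofReal_le_ofReal ((hf.lip _ _).trans ?_)
          rw [show x - (x - Real.sqrt u • z) = Real.sqrt u • z by abel, hf.hN.2.1, abs_of_nonneg (Real.sqrt_nonneg _), mul_assoc]
      _ ≤ _ := by
          rw [lintegral_const_mul _ hf.hN.cont.measurable.ennreal_ofReal]
          gcongr
          exact hf.hN.gm_N hn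
  rw [← ofReal_norm, ENNReal.ofReal_le_ofReal_iff (by positivity)] at h1
  exact h1

theorem Good.G_sm (hf : Good N L f) (u : ℝ) :
    StronglyMeasurable fun x => heat u f x - heat (3 * u) f x :=
  (heat_sm' measurable_const measurable_id hf.sm).sub (heat_sm' measurable_const measurable_id hf.sm)

theorem Good.G_ftc (hf : Good N L f) {u : ℝ} (hu : 0 < u) (x' z : EuclideanSpace ℝ (Fin n)) {δ : ℝ}
    (hδ : 0 ≤ δ) :
    ‖(heat u f (x' + δ • z) - heat (3 * u) f (x' + δ • z)) - (heat u f x' - heat (3 * u) f x')‖ₑ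
      ≤ ∫⁻ r in Ioc 0 δ, ‖dh f z u (x' + r • z) - dh f z (3 * u) (x' + r • z)‖ₑ := by
  have hu3 : 0 < 3 * u := by positivity
  have hc : ∀ {s : ℝ}, 0 < s → Continuous fun r : ℝ => dh f z s (x' + r • z) := fun hs =>
    (hf.dh_cont z hs).comp (by fun_prop)
  have e : (heat u f (x' + δ • z) - heat (3 * u) f (x' + δ • z)) - (heat u f x' - heat (3 * u) f x')
      = ∫ r in (0 : ℝ)..δ, (dh f z u (x' + r • z) - dh f z (3 * u) (x' + r • z)) := by
    rw [intervalIntegral.integral_sub ((hc hu).intervalIntegrable _ _)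
      ((hc hu3).intervalIntegrable _ _), ← hf.dh_ftc z x' hu, ← hf.dh_ftc z x' hu3]
    abel
  rw [e, intervalIntegral.integral_of_le hδ]
  exact enorm_integral_le_lintegral_enorm _

theorem Good.T_meas (hf : Good N L f) {u : ℝ} (hu : 0 < u)
    {a : EuclideanSpace ℝ (Fin n) × ℝ → EuclideanSpace ℝ (Fin n)} (ham : Measurable a) :
    Measurable (Function.uncurry fun (p : EuclideanSpace ℝ (Fin n) × ℝ) x =>
      ‖dh f p.1 u (x - a p) - dh f p.1 (3 * u) (x - a p)‖ₑ) := by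
  have hT0 : ∀ s : ℝ, 0 < s →
      StronglyMeasurable fun p : (EuclideanSpace ℝ (Fin n) × ℝ) × EuclideanSpace ℝ (Fin n) =>
        dh f p.1.1 s (p.2 - a p.1) := fun s hs =>
    hf.dh_sm (a := fun _ => s) (b := fun p => p.2 - a p.1)
      (c := fun p : (EuclideanSpace ℝ (Fin n) × ℝ) × EuclideanSpace ℝ (Fin n) => p.1.1)
      measurable_const (fun _ => hs)
      (measurable_snd.sub (ham.comp measurable_fst)) (measurable_fst.comp measurable_fst)
  have h2 : StronglyMeasurable fun p : (EuclideanSpace ℝ (Fin n) × ℝ) × EuclideanSpace ℝ (Fin n) =>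
        dh f p.1.1 u (p.2 - a p.1) - dh f p.1.1 (3 * u) (p.2 - a p.1) :=
    (hT0 u hu).sub (hT0 _ (by positivity))
  exact h2.enorm

theorem Good.B1 (hf : Good N L f) {q : ℝ} (hq : 2 ≤ q) {u v : ℝ} (hu : 0 < u) (hv : 0 ≤ v) :
    nq q volume (fun x => ‖heat u (fun x => heat u f x - heat (3 * u) f x) x
      - heat (u + v) (fun x => heat u f x - heat (3 * u) f x) x‖ₑ)
      ≤ ENNReal.ofReal (v / (2 * Real.sqrt u)) * ∫⁻ z, Gq q f z u ∂gm n 1 := by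
  obtain ⟨C, hb⟩ := hf.bdd
  have hu3 : 0 < 3 * u := by positivity
  have := gm_prob n one_pos
  set δ := Real.sqrt (u + v) - Real.sqrt u with hδ
  have hδ0 : 0 ≤ δ := sub_nonneg.2 (Real.sqrt_le_sqrt (by linarith))
  set ρ := (gm n 1).prod (volume.restrict (Ioc 0 δ)) with hρ
  let a : EuclideanSpace ℝ (Fin n) × ℝ → EuclideanSpace ℝ (Fin n) := fun p =>
    Real.sqrt (u + v) • p.1 - p.2 • p.1
  have ham : Measurable a := by fun_prop
  let T : EuclideanSpace ℝ (Fin n) × ℝ → EuclideanSpace ℝ (Fin n) → ℝ≥0∞ := fun p x =>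
    ‖dh f p.1 u (x - a p) - dh f p.1 (3 * u) (x - a p)‖ₑ
  have hT : Measurable (Function.uncurry T) := hf.T_meas hu ham
  have hpt : ∀ x, ‖heat u (fun x => heat u f x - heat (3 * u) f x) x
      - heat (u + v) (fun x => heat u f x - heat (3 * u) f x) x‖ₑ ≤ ∫⁻ p, T p x ∂ρ := by
    intro x
    have hTx : Measurable fun p => T p x := hT.of_uncurry_right
    rw [hρ, lintegral_prod _ hTx.aemeasurable]
    refine (heat_diff_time (C := C + C) (hf.G_sm u) (fun x => (norm_sub_le _ _).trans
      (add_le_add (heat_norm_le hb hu x) (heat_norm_le hb hu3 x))) hu (by linarith) x).trans ?_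
    refine lintegral_mono fun z => ?_
    have h := hf.G_ftc hu (x - Real.sqrt (u + v) • z) z hδ0
    have e : x - Real.sqrt (u + v) • z + δ • z = x - Real.sqrt u • z := by
      rw [hδ, sub_smul]; abel
    rw [e] at h
    refine h.trans (le_of_eq ?_)
    refine lintegral_congr fun r => ?_
    have e2 : x - Real.sqrt (u + v) • z + r • z = x - a (z, r) := by
      simp only [a]; abel
    rw [e2]
  refine (nq_mono hq _ hpt).trans ((nq_lintegral ρ _ hq hT).trans ?_)
  have hTp : ∀ p, nq q volume (T p) = Gq q f p.1 u := fun p =>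
    nq_translate (fun x => ‖dh f p.1 u x - dh f p.1 (3 * u) x‖ₑ) (a p)
  simp only [hTp]
  have hGm : Measurable fun z => Gq q f z u := hf.Gq_meas measurable_const (fun _ => hu) measurable_id
  have hGm' : Measurable fun p : EuclideanSpace ℝ (Fin n) × ℝ => Gq q f p.1 u := hGm.comp measurable_fst
  rw [hρ, lintegral_prod _ hGm'.aemeasurable]
  simp only [lintegral_const, Measure.restrict_apply_univ, Real.volume_Ioc, sub_zero]
  rw [lintegral_mul_const _ hGm, mul_comm]
  gcongr
  exact sqrt_diff_le hu hv

theorem Good.B2 (hf : Good N L f) (hn : 0 < n) {v : ℝ} (hv : 0 < v) (x : EuclideanSpace ℝ (Fin n)) :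
    ‖heat v f x - heat (2 * v) f x‖ₑ ≤ ∑' k : ℕ,
      ‖heat (2 ^ k * (v / 2)) (fun x => heat (2 ^ k * (v / 2)) f x - heat (3 * (2 ^ k * (v / 2))) f x) x
      - heat (2 ^ k * (v / 2) + v)
        (fun x => heat (2 ^ k * (v / 2)) f x - heat (3 * (2 ^ k * (v / 2))) f x) x‖ₑ := by
  obtain ⟨C, hb⟩ := hf.bdd
  have key : ∀ {u s : ℝ}, 0 < u → 0 < s →
      heat s (fun x => heat u f x - heat (3 * u) f x) x = heat (s + u) f x - heat (s + 3 * u) f x := by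
    intro u s hu hs
    have hsm : ∀ a : ℝ, StronglyMeasurable (heat a f) := fun a =>
      heat_sm' measurable_const measurable_id hf.sm
    rw [heat_sub (hsm u) (heat_norm_le hb hu) (hsm _) (heat_norm_le hb (by positivity)) hs,
      heat_heat hf.sm hb hs hu, heat_heat hf.sm hb hs (by positivity)]
  refine enorm_le_tsum_of_tele (r := fun K => heat (2 ^ K * v) f x - heat (2 ^ K * v + v) f x)
    (fun K => ?_) ?_
  · induction K with
    | zero => simp [two_mul]
    | succ K ih =>
      rw [Finset.sum_range_succ, ih]
      have hu : 0 < 2 ^ K * (v / 2) := by positivity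
      rw [key hu hu, key hu (by positivity),
        show 2 ^ K * (v / 2) + 2 ^ K * (v / 2) = 2 ^ K * v by ring,
        show 2 ^ K * (v / 2) + 3 * (2 ^ K * (v / 2)) = 2 ^ (K + 1) * v by ring,
        show 2 ^ K * (v / 2) + v + 2 ^ K * (v / 2) = 2 ^ K * v + v by ring,
        show 2 ^ K * (v / 2) + v + 3 * (2 ^ K * (v / 2)) = 2 ^ (K + 1) * v + v by ring]
      abel
  · refine squeeze_zero (fun _ => norm_nonneg _) (fun K => ?_)
      (tendsto_inv_sqrt_two_pow hv (L * (v / 2) * (8 * Real.sqrt n * MX N)))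
    refine (hf.time_lip hn (by positivity) hv.le x).trans (le_of_eq ?_)
    field_simp

theorem Good.B3 (hf : Good N L f) (hn : 0 < n) {q : ℝ} (hq : 2 ≤ q) {m : ℝ} (hm0 : 0 ≤ m)
    (hY : MartCotypeBound q Y m) {c : ℝ} (hc : 0 < c) :
    nq q volume (fun y : ℝ => nq q volume fun x => ENNReal.ofReal (Real.exp (-y)) *
      ‖heat (c * Real.exp (2 * y)) f x - heat (2 * (c * Real.exp (2 * y))) f x‖ₑ)
      ≤ ENNReal.ofReal (4 * Real.sqrt c) * (AA q m L f * ENNReal.ofReal (8 * Real.sqrt n * MX N)) := by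
  have := gm_prob n one_pos
  have hGm : ∀ k : ℕ, Measurable fun p : EuclideanSpace ℝ (Fin n) × ℝ =>
      Gq q f p.1 (2 ^ k * (c / 2) * Real.exp (2 * p.2)) := fun k =>
    hf.Gq_meas (by fun_prop) (fun y => by positivity) measurable_fst
  have hIm : ∀ k : ℕ, Measurable fun y : ℝ =>
      ∫⁻ z, Gq q f z (2 ^ k * (c / 2) * Real.exp (2 * y)) ∂gm n 1 := fun k =>
    (hGm k).lintegral_prod_left'
  have hb : ∀ y : ℝ, nq q volume (fun x => ENNReal.ofReal (Real.exp (-y)) *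
      ‖heat (c * Real.exp (2 * y)) f x - heat (2 * (c * Real.exp (2 * y))) f x‖ₑ) ≤ ∑' k : ℕ,
      ENNReal.ofReal (Real.sqrt c / Real.sqrt (2 ^ k)) *
        ∫⁻ z, Gq q f z (2 ^ k * (c / 2) * Real.exp (2 * y)) ∂gm n 1 := by
    intro y
    set v := c * Real.exp (2 * y) with hvd
    have hv : 0 < v := by positivity
    have hm : ∀ a b : ℝ, ∀ F : EuclideanSpace ℝ (Fin n) → Y, StronglyMeasurable F →
        Measurable fun x => ‖heat a F x - heat b F x‖ₑ := fun a b F hF =>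
      ((heat_sm' measurable_const measurable_id hF).sub
        (heat_sm' measurable_const measurable_id hF)).enorm
    rw [nq_const_mul hq _ _ (hm _ _ _ hf.sm)]
    calc _ ≤ ENNReal.ofReal (Real.exp (-y)) * ∑' k : ℕ,
          ENNReal.ofReal (v / (2 * Real.sqrt (2 ^ k * (v / 2)))) *
            ∫⁻ z, Gq q f z (2 ^ k * (v / 2)) ∂gm n 1 := by
          gcongr
          refine (nq_mono hq _ (hf.B2 hn hv)).trans ?_
          refine (nq_tsum _ hq fun k => hm _ _ _ (hf.G_sm _)).trans ?_
          exact ENNReal.tsum_le_tsum fun k => hf.B1 hq (by positivity) hv.le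
      _ = ∑' k : ℕ, ENNReal.ofReal (Real.exp (-y) * (v / (2 * Real.sqrt (2 ^ k * (v / 2))))) *
            ∫⁻ z, Gq q f z (2 ^ k * (v / 2)) ∂gm n 1 := by
          rw [← ENNReal.tsum_mul_left]
          refine tsum_congr fun k => ?_
          rw [← mul_assoc, ← ENNReal.ofReal_mul (Real.exp_pos _).le]
      _ ≤ _ := by
          refine ENNReal.tsum_le_tsum fun k => ?_
          have e1 : 2 ^ k * (v / 2) = 2 ^ k * (c / 2) * Real.exp (2 * y) := by rw [hvd]; ring
          rw [e1]
          gcongr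
          rw [← e1, Real.sqrt_mul (by positivity)]
          have e2 : Real.sqrt (v / 2) * (Real.sqrt (v / 2)) = v / 2 := Real.mul_self_sqrt (by positivity)
          have e3 : Real.sqrt v = Real.sqrt c * Real.exp y := by
            rw [hvd, Real.sqrt_mul hc.le]
            congr 1
            rw [two_mul, Real.exp_add, Real.sqrt_mul_self (Real.exp_pos y).le]
          have e4 : 0 < Real.sqrt (v / 2) := Real.sqrt_pos.2 (by positivity)
          have e5 : v / (2 * (Real.sqrt (2 ^ k) * Real.sqrt (v / 2)))
              = Real.sqrt (v / 2) / Real.sqrt (2 ^ k) := by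
            have : v = 2 * (Real.sqrt (v / 2) * (Real.sqrt (v / 2))) := by linarith
            conv_lhs => lhs; rw [this]
            field_simp
          have e6 : Real.sqrt (v / 2) ≤ Real.sqrt v := Real.sqrt_le_sqrt (by linarith)
          rw [e5]
          calc Real.exp (-y) * (Real.sqrt (v / 2) / Real.sqrt (2 ^ k))
              ≤ Real.exp (-y) * (Real.sqrt v / Real.sqrt (2 ^ k)) := by gcongr
            _ = (Real.exp (-y) * Real.exp y) * (Real.sqrt c / Real.sqrt (2 ^ k)) := by rw [e3]; ring
            _ = _ := by rw [← Real.exp_add, neg_add_cancel, Real.exp_zero, one_mul]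
  refine (nq_mono hq _ hb).trans ?_
  refine (nq_tsum _ hq fun k => (hIm k).const_mul _).trans ?_
  calc _ ≤ ∑' k : ℕ, ENNReal.ofReal (Real.sqrt c / Real.sqrt (2 ^ k)) *
          (AA q m L f * ENNReal.ofReal (8 * Real.sqrt n * MX N)) := by
        refine ENNReal.tsum_le_tsum fun k => ?_
        rw [nq_const_mul hq _ _ (hIm k)]
        gcongr
        refine (nq_lintegral _ _ hq (hGm k)).trans ?_
        calc _ ≤ ∫⁻ z, AA q m L f * ENNReal.ofReal (N z) ∂gm n 1 :=
              lintegral_mono fun z => hf.LP2 hq hm0 hY z (by positivity)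
          _ ≤ _ := by
              rw [lintegral_const_mul _ hf.hN.cont.measurable.ennreal_ofReal]
              gcongr
              exact hf.hN.gm_N hn
    _ ≤ _ := by
        refine tsum_geom_le (by positivity) (fun k => ?_) _
        have h1 := sqrt_two_pow_inv k
        calc Real.sqrt c / Real.sqrt (2 ^ k) = Real.sqrt c * (1 / Real.sqrt (2 ^ k)) := by ring
          _ ≤ _ := by gcongr

theorem Good.B4 (hf : Good N L f) (hn : 0 < n) {s : ℝ} (hs : 0 < s) (x : EuclideanSpace ℝ (Fin n)) :
    ‖f x - heat s f x‖ₑ ≤ ∑' j : ℕ, ‖heat (s / 2 ^ (j + 1)) f x - heat (2 * (s / 2 ^ (j + 1))) f x‖ₑ := by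
  refine enorm_le_tsum_of_tele (r := fun K => f x - heat (s / 2 ^ K) f x) (fun K => ?_) ?_
  · induction K with
    | zero => simp
    | succ K ih =>
      rw [Finset.sum_range_succ, ih, show 2 * (s / 2 ^ (K + 1)) = s / 2 ^ K by rw [pow_succ]; field_simp]
      abel
  · refine squeeze_zero (fun _ => norm_nonneg _) (fun K => hf.time_zero hn (by positivity) x) ?_
    have h1 : Filter.Tendsto (fun K : ℕ => s / 2 ^ K) Filter.atTop (nhds 0) :=
      tendsto_const_nhds.div_atTop (tendsto_pow_atTop_atTop_of_one_lt (by norm_num))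
    have h2 := (Real.continuous_sqrt.tendsto 0).comp h1
    rw [Real.sqrt_zero] at h2
    have h3 := (h2.const_mul L).mul_const (8 * Real.sqrt n * MX N)
    simpa using h3

theorem Good.B_main (hf : Good N L f) (hn : 0 < n) {q : ℝ} (hq : 2 ≤ q) {m : ℝ} (hm0 : 0 ≤ m)
    (hY : MartCotypeBound q Y m) {γ : ℝ} (hγ : 0 < γ) :
    nq q volume (fun y : ℝ => nq q volume fun x => ENNReal.ofReal (Real.exp (-y)) *
      ‖f x - heat (γ * Real.exp (2 * y)) f x‖ₑ)
      ≤ ENNReal.ofReal (4 * (4 * Real.sqrt γ)) *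
        (AA q m L f * ENNReal.ofReal (8 * Real.sqrt n * MX N)) := by
  have hjm : ∀ j : ℕ, Measurable fun p : ℝ × EuclideanSpace ℝ (Fin n) =>
      ENNReal.ofReal (Real.exp (-p.1)) * ‖heat (γ / 2 ^ (j + 1) * Real.exp (2 * p.1)) f p.2
        - heat (2 * (γ / 2 ^ (j + 1) * Real.exp (2 * p.1))) f p.2‖ₑ := fun j =>
    (by fun_prop : Measurable fun p : ℝ × EuclideanSpace ℝ (Fin n) =>
      ENNReal.ofReal (Real.exp (-p.1))).mul
    ((heat_sm' (a := fun p : ℝ × EuclideanSpace ℝ (Fin n) => γ / 2 ^ (j + 1) * Real.exp (2 * p.1))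
      (b := fun p => p.2) (by fun_prop) (by fun_prop) hf.sm).sub
    (heat_sm' (a := fun p : ℝ × EuclideanSpace ℝ (Fin n) => 2 * (γ / 2 ^ (j + 1) * Real.exp (2 * p.1)))
      (b := fun p => p.2) (by fun_prop) (by fun_prop) hf.sm)).enorm
  have hb : ∀ y : ℝ, nq q volume (fun x => ENNReal.ofReal (Real.exp (-y)) *
      ‖f x - heat (γ * Real.exp (2 * y)) f x‖ₑ) ≤ ∑' j : ℕ, nq q volume fun x =>
        ENNReal.ofReal (Real.exp (-y)) * ‖heat (γ / 2 ^ (j + 1) * Real.exp (2 * y)) f x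
        - heat (2 * (γ / 2 ^ (j + 1) * Real.exp (2 * y))) f x‖ₑ := by
    intro y
    refine le_trans (nq_mono hq _ fun x => ?_)
      (nq_tsum _ hq fun j => (hjm j).comp (measurable_const.prodMk measurable_id))
    have h := hf.B4 hn (by positivity : 0 < γ * Real.exp (2 * y)) x
    show _ ≤ ∑' j : ℕ, ENNReal.ofReal (Real.exp (-y)) * _
    rw [ENNReal.tsum_mul_left]
    gcongr
    refine h.trans (le_of_eq (tsum_congr fun j => ?_))
    rw [show γ * Real.exp (2 * y) / 2 ^ (j + 1) = γ / 2 ^ (j + 1) * Real.exp (2 * y) by ring]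
  refine (nq_mono hq _ hb).trans ?_
  refine (nq_tsum _ hq fun j => nq_meas volume (hjm j)).trans ?_
  refine (ENNReal.tsum_le_tsum fun j => hf.B3 hn hq hm0 hY (by positivity)).trans ?_
  refine tsum_geom_le (by positivity) (fun j => ?_) _
  rw [Real.sqrt_div hγ.le]
  have h1 := sqrt_two_pow_inv (j + 1)
  have h2 : (3 / 4 : ℝ) ^ (j + 1) ≤ (3 / 4) ^ j :=
    pow_le_pow_of_le_one (by norm_num) (by norm_num) (Nat.le_succ j)
  calc 4 * (Real.sqrt γ / Real.sqrt (2 ^ (j + 1)))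
      = 4 * Real.sqrt γ * (1 / Real.sqrt (2 ^ (j + 1))) := by ring
    _ ≤ 4 * Real.sqrt γ * (3 / 4) ^ j := by
        gcongr
        exact h1.trans h2

end B

theorem nq_mono_ae {X : Type*} [MeasurableSpace X] {q : ℝ} (hq : 2 ≤ q) (μ : Measure X)
    {φ ψ : X → ℝ≥0∞} (h : ∀ᵐ x ∂μ, φ x ≤ ψ x) : nq q μ φ ≤ nq q μ ψ := by
  unfold nq
  have hq0 : 0 ≤ q := by linarith
  refine ENNReal.rpow_le_rpow (lintegral_mono_ae ?_) (by positivity)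
  filter_upwards [h] with x hx
  exact ENNReal.rpow_le_rpow hx hq0

theorem nq_const {X : Type*} [MeasurableSpace X] {q : ℝ} (hq : 2 ≤ q) (μ : Measure X)
    [IsProbabilityMeasure μ] (c : ℝ≥0∞) : nq q μ (fun _ => c) = c := by
  unfold nq
  rw [lintegral_const, measure_univ, mul_one, ← ENNReal.rpow_mul, mul_one_div_cancel (by linarith),
    ENNReal.rpow_one]

/-- uniform measure on the unit ball -/
def ub {n : ℕ} (N : EuclideanSpace ℝ (Fin n) → ℝ) : Measure (EuclideanSpace ℝ (Fin n)) :=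
  (volume {x | N x ≤ 1})⁻¹ • volume.restrict {x | N x ≤ 1}

section C
variable {n : ℕ} {N : EuclideanSpace ℝ (Fin n) → ℝ}

theorem IsNorm.ball_meas (hN : IsNorm N) : MeasurableSet {x | N x ≤ 1} :=
  hN.compact.isClosed.measurableSet

theorem IsNorm.ub_prob (hN : IsNorm N) : IsProbabilityMeasure (ub N) := by
  constructor
  rw [ub, Measure.smul_apply, Measure.restrict_apply_univ, smul_eq_mul]
  exact ENNReal.inv_mul_cancel hN.vol_pos.ne' hN.vol_lt_top.ne

theorem IsNorm.ub_ae (hN : IsNorm N) : ∀ᵐ x ∂(ub N), N x ≤ 1 := by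
  unfold ub
  refine Measure.ae_smul_measure ?_ _
  exact ae_restrict_mem hN.ball_meas

theorem IsNorm.chg (hN : IsNorm N) {t : ℝ} (ht : 0 < t) (x : EuclideanSpace ℝ (Fin n))
    (g : EuclideanSpace ℝ (Fin n) → ℝ≥0∞) :
    ∫⁻ w in {x | N x ≤ 1}, g (x + t • w) =
      ENNReal.ofReal |(t ^ n)⁻¹| * ∫⁻ y in {y | N (y - x) ≤ t}, g y := by
  have hS : MeasurableSet {y | N (y - x) ≤ t} :=
    (isClosed_le (hN.cont.comp (by fun_prop)) continuous_const).measurableSet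
  set h : EuclideanSpace ℝ (Fin n) → ℝ≥0∞ := fun y => {y | N (y - x) ≤ t}.indicator g y with hh
  have h1 : ∫⁻ w in {x | N x ≤ 1}, g (x + t • w) = ∫⁻ w, h (x + t • w) := by
    rw [← lintegral_indicator hN.ball_meas]
    refine lintegral_congr fun w => ?_
    have e : N (x + t • w - x) ≤ t ↔ N w ≤ 1 := by
      rw [add_sub_cancel_left, hN.2.1, abs_of_pos ht]
      exact mul_le_iff_le_one_right ht
    by_cases hw : N w ≤ 1
    · rw [indicator_of_mem (show w ∈ {x | N x ≤ 1} from hw), hh]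
      exact (indicator_of_mem (show x + t • w ∈ {y | N (y - x) ≤ t} from e.2 hw) g).symm
    · rw [indicator_of_notMem (show w ∉ {x | N x ≤ 1} from hw), hh]
      exact (indicator_of_notMem (show x + t • w ∉ {y | N (y - x) ≤ t} from fun h => hw (e.1 h)) g).symm
  have h2 : ∫⁻ w, h (x + t • w) = ∫⁻ z, h (x + z) ∂(Measure.map (fun w => t • w) volume) := by
    have hemb : MeasurableEmbedding (fun w : EuclideanSpace ℝ (Fin n) => t • w) :=
      (Homeomorph.smulOfNeZero t ht.ne').measurableEmbedding
    rw [hemb.lintegral_map]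
  rw [h1, h2, Measure.map_addHaar_smul volume ht.ne', lintegral_smul_measure, finrank_euclideanSpace,
    Fintype.card_fin, lintegral_add_left_eq_self h x, smul_eq_mul, hh, lintegral_indicator hS]

theorem IsNorm.avg (hN : IsNorm N) {t : ℝ} (ht : 0 < t) (x : EuclideanSpace ℝ (Fin n))
    (g : EuclideanSpace ℝ (Fin n) → ℝ≥0∞) :
    (∫⁻ y in {y | N (y - x) ≤ t}, g y) / volume {y | N (y - x) ≤ t} = ∫⁻ w, g (x + t • w) ∂(ub N) := by
  have h1 := hN.chg ht x g
  have h2 := hN.chg ht x (fun _ => 1)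
  rw [lintegral_const, lintegral_const, one_mul, one_mul, Measure.restrict_apply_univ,
    Measure.restrict_apply_univ] at h2
  have hc0 : ENNReal.ofReal |(t ^ n)⁻¹| ≠ 0 := by
    rw [Ne, ENNReal.ofReal_eq_zero, not_le]; positivity
  have hct : ENNReal.ofReal |(t ^ n)⁻¹| ≠ ∞ := ofReal_ne_top
  rw [ub, lintegral_smul_measure, h1, h2, smul_eq_mul, ENNReal.mul_inv (Or.inl hc0) (Or.inl ofReal_ne_top),
    ENNReal.div_eq_inv_mul]
  generalize ENNReal.ofReal |(t ^ n)⁻¹| = c at hc0 hct ⊢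
  calc _ = (c⁻¹ * c) *
        ((volume {y | N (y - x) ≤ t})⁻¹ * ∫⁻ y in {y | N (y - x) ≤ t}, g y) := by
        rw [ENNReal.inv_mul_cancel hc0 hct, one_mul]
    _ = _ := by ring

theorem IsNorm.iq_int (hN : IsNorm N) {q : ℝ} (hq : 2 ≤ q) :
    IntegrableOn (fun x : EuclideanSpace ℝ (Fin n) => ‖x‖ ^ q) {x | N x ≤ 1} :=
  (continuous_norm.rpow_const fun _ => Or.inr (by linarith)).continuousOn.integrableOn_compact hN.compact

theorem IsNorm.nq_ub (hN : IsNorm N) {q : ℝ} (hq : 2 ≤ q) :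
    nq q (ub N) (fun w => ENNReal.ofReal ‖w‖) = ENNReal.ofReal (IqX q N) := by
  have hq0 : 0 ≤ q := by linarith
  have hV : 0 < volume.real {x | N x ≤ 1} := ENNReal.toReal_pos hN.vol_pos.ne' hN.vol_lt_top.ne
  have h0 : 0 ≤ ⨍ x in {x : EuclideanSpace ℝ (Fin n) | N x ≤ 1}, ‖x‖ ^ q := by
    rw [setAverage_eq]
    refine smul_nonneg (by positivity) (integral_nonneg fun x => by positivity)
  rw [IqX, ← ENNReal.ofReal_rpow_of_nonneg h0 (by positivity), nq]
  congr 1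
  rw [setAverage_eq, smul_eq_mul, ENNReal.ofReal_mul (by positivity), ENNReal.ofReal_inv_of_pos hV,
    measureReal_def, ENNReal.ofReal_toReal hN.vol_lt_top.ne,
    ofReal_integral_eq_lintegral_ofReal (hN.iq_int hq) (Filter.Eventually.of_forall fun x => by positivity),
    ub, lintegral_smul_measure, smul_eq_mul]
  congr 1
  refine lintegral_congr fun x => ?_
  rw [ENNReal.ofReal_rpow_of_nonneg (norm_nonneg x) hq0]

theorem IsNorm.iq_pos (hN : IsNorm N) (hn : 0 < n) {q : ℝ} (hq : 2 ≤ q) : 0 < IqX q N := by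
  have : Nonempty (Fin n) := ⟨⟨0, hn⟩⟩
  have hV : 0 < volume.real {x | N x ≤ 1} := ENNReal.toReal_pos hN.vol_pos.ne' hN.vol_lt_top.ne
  unfold IqX
  refine Real.rpow_pos_of_pos ?_ _
  rw [setAverage_eq, smul_eq_mul]
  refine mul_pos (by positivity) ?_
  rw [integral_pos_iff_support_of_nonneg (fun x => by positivity) (hN.iq_int hq)]
  have : Function.support (fun x : EuclideanSpace ℝ (Fin n) => ‖x‖ ^ q) = {0}ᶜ := by
    ext x
    simp only [Function.mem_support, mem_compl_iff, mem_singleton_iff, Ne]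
    rw [Real.rpow_eq_zero (norm_nonneg x) (by linarith), norm_eq_zero]
  rw [this, Measure.restrict_apply (measurableSet_singleton _).compl, inter_comm, ← diff_eq,
    measure_sdiff_null (measure_singleton _)]
  exact hN.vol_pos

end C

theorem lintegral_exp_subst (Φ : ℝ → ℝ≥0∞) (q : ℝ) (hq : 0 ≤ q) :
    ∫⁻ t in Ioi (0 : ℝ), Φ t / ENNReal.ofReal (t ^ (q + 1))
      = ∫⁻ y : ℝ, ENNReal.ofReal (Real.exp (-y)) ^ q * Φ (Real.exp y) := by
  have h := lintegral_image_eq_lintegral_abs_deriv_mul (s := univ) (f := Real.exp) (f' := Real.exp)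
    MeasurableSet.univ (fun x _ => (Real.hasDerivAt_exp x).hasDerivWithinAt) Real.exp_injective.injOn
    (fun t => Φ t / ENNReal.ofReal (t ^ (q + 1)))
  rw [image_univ, Real.range_exp, Measure.restrict_univ] at h
  rw [h]
  refine lintegral_congr fun y => ?_
  rw [ENNReal.div_eq_inv_mul, ← mul_assoc]
  congr 1
  rw [abs_of_pos (Real.exp_pos y), ENNReal.ofReal_rpow_of_nonneg (Real.exp_pos _).le hq,
    ← ENNReal.ofReal_inv_of_pos (by positivity), ← ENNReal.ofReal_mul (by positivity)]
  congr 1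
  rw [← Real.exp_mul, ← Real.exp_mul, ← Real.exp_neg, ← Real.exp_add]
  congr 1; ring

section D
variable {n : ℕ} {Y : Type u} [NormedAddCommGroup Y] [NormedSpace ℝ Y] [CompleteSpace Y]
  {N : EuclideanSpace ℝ (Fin n) → ℝ} {L : ℝ} {f : EuclideanSpace ℝ (Fin n) → Y}

theorem taylor_eq (s t : ℝ) (x w : EuclideanSpace ℝ (Fin n)) :
    taylor1 (heat s f) x (x + t • w) = heat s f x + t • dh f w s x := by
  unfold taylor1 dh
  congr 1
  rw [add_sub_cancel_left]
  have e : ∑ j, (t • w) j • EuclideanSpace.single j (1 : ℝ) = t • w := by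
    have := (EuclideanSpace.basisFun (Fin n) ℝ).sum_repr (t • w)
    simpa using this
  calc _ = fderiv ℝ (heat s f) x (∑ j, (t • w) j • EuclideanSpace.single j (1 : ℝ)) := by
        rw [map_sum]
        simp only [map_smul]
    _ = _ := by rw [e, map_smul]

theorem split_eq (s t : ℝ) (x w : EuclideanSpace ℝ (Fin n)) :
    f (x + t • w) - taylor1 (heat s f) x (x + t • w)
      = RR f s t w x + (f (x + t • w) - heat s f (x + t • w)) := by
  rw [taylor_eq, RR]; abel

/-- first part -/
def P1f (f : EuclideanSpace ℝ (Fin n) → Y) (γ : ℝ)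
    (p : EuclideanSpace ℝ (Fin n) × (ℝ × EuclideanSpace ℝ (Fin n))) : ℝ≥0∞ :=
  ENNReal.ofReal (Real.exp (-p.2.1)) * ‖RR f (γ * Real.exp (2 * p.2.1)) (Real.exp p.2.1) p.1 p.2.2‖ₑ

/-- second part -/
def P2f (f : EuclideanSpace ℝ (Fin n) → Y) (γ : ℝ)
    (p : EuclideanSpace ℝ (Fin n) × (ℝ × EuclideanSpace ℝ (Fin n))) : ℝ≥0∞ :=
  ENNReal.ofReal (Real.exp (-p.2.1)) * ‖f (p.2.2 + Real.exp p.2.1 • p.1)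
    - heat (γ * Real.exp (2 * p.2.1)) f (p.2.2 + Real.exp p.2.1 • p.1)‖ₑ

theorem Good.P1f_meas (hf : Good N L f) {γ : ℝ} (hγ : 0 < γ) : Measurable (P1f f γ) := by
  have h1 : StronglyMeasurable fun p : EuclideanSpace ℝ (Fin n) × (ℝ × EuclideanSpace ℝ (Fin n)) =>
      heat (γ * Real.exp (2 * p.2.1)) f (p.2.2 + Real.exp p.2.1 • p.1) :=
    heat_sm' (by fun_prop) (by fun_prop) hf.sm
  have h2 : StronglyMeasurable fun p : EuclideanSpace ℝ (Fin n) × (ℝ × EuclideanSpace ℝ (Fin n)) =>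
      heat (γ * Real.exp (2 * p.2.1)) f p.2.2 :=
    heat_sm' (by fun_prop) (by fun_prop) hf.sm
  have h3 : StronglyMeasurable fun p : EuclideanSpace ℝ (Fin n) × (ℝ × EuclideanSpace ℝ (Fin n)) =>
      dh f p.1 (γ * Real.exp (2 * p.2.1)) p.2.2 :=
    hf.dh_sm (by fun_prop) (fun p => by positivity) (by fun_prop) (by fun_prop)
  have h4 : StronglyMeasurable fun p : EuclideanSpace ℝ (Fin n) × (ℝ × EuclideanSpace ℝ (Fin n)) =>
      Real.exp p.2.1 :=
    (by fun_prop : Measurable fun p : EuclideanSpace ℝ (Fin n) × (ℝ × EuclideanSpace ℝ (Fin n)) =>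
      Real.exp p.2.1).stronglyMeasurable
  have h5 : StronglyMeasurable fun p : EuclideanSpace ℝ (Fin n) × (ℝ × EuclideanSpace ℝ (Fin n)) =>
      RR f (γ * Real.exp (2 * p.2.1)) (Real.exp p.2.1) p.1 p.2.2 := (h1.sub h2).sub (h4.smul h3)
  have h6 : Measurable fun p : EuclideanSpace ℝ (Fin n) × (ℝ × EuclideanSpace ℝ (Fin n)) =>
      ENNReal.ofReal (Real.exp (-p.2.1)) := by fun_prop
  exact h6.mul h5.enorm

theorem Good.P2f_meas (hf : Good N L f) {γ : ℝ} : Measurable (P2f f γ) := by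
  have h0 : Measurable fun p : EuclideanSpace ℝ (Fin n) × (ℝ × EuclideanSpace ℝ (Fin n)) =>
    p.2.2 + Real.exp p.2.1 • p.1 := by fun_prop
  have h1 : StronglyMeasurable fun p : EuclideanSpace ℝ (Fin n) × (ℝ × EuclideanSpace ℝ (Fin n)) =>
      heat (γ * Real.exp (2 * p.2.1)) f (p.2.2 + Real.exp p.2.1 • p.1) :=
    heat_sm' (by fun_prop) h0 hf.sm
  have h5 : StronglyMeasurable fun p : EuclideanSpace ℝ (Fin n) × (ℝ × EuclideanSpace ℝ (Fin n)) =>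
      f (p.2.2 + Real.exp p.2.1 • p.1) - heat (γ * Real.exp (2 * p.2.1)) f (p.2.2 + Real.exp p.2.1 • p.1) :=
    (hf.sm.comp_measurable h0).sub h1
  have h6 : Measurable fun p : EuclideanSpace ℝ (Fin n) × (ℝ × EuclideanSpace ℝ (Fin n)) =>
      ENNReal.ofReal (Real.exp (-p.2.1)) := by fun_prop
  exact h6.mul h5.enorm

theorem nq_prod3 {A B C : Type*} [MeasurableSpace A] [MeasurableSpace B] [MeasurableSpace C]
    (ρ : Measure A) (μ : Measure B) (ν : Measure C) [SFinite ρ] [SFinite μ] [SFinite ν] {q : ℝ}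
    (hq : 2 ≤ q) {Φ : A × (B × C) → ℝ≥0∞} (h : Measurable Φ) :
    nq q (ρ.prod (μ.prod ν)) Φ = nq q ρ fun a => nq q μ fun b => nq q ν fun c => Φ (a, (b, c)) := by
  rw [nq_prod _ _ hq h]
  congr 1
  funext a
  exact nq_prod μ ν hq (h.comp measurable_prodMk_left)

theorem Good.P1f_le (hf : Good N L f) {q : ℝ} (hq : 2 ≤ q) {m : ℝ} (hm0 : 0 ≤ m)
    (hY : MartCotypeBound q Y m) {γ : ℝ} (hγ : 0 < γ) :
    nq q ((ub N).prod (volume.prod volume)) (P1f f γ) ≤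
      ENNReal.ofReal (24 / Real.sqrt γ * IqX q N) * AA q m L f := by
  have := hf.hN.ub_prob
  rw [nq_prod3 _ _ _ hq (hf.P1f_meas hγ)]
  calc _ ≤ nq q (ub N) fun w => (ENNReal.ofReal (24 / Real.sqrt γ) * AA q m L f) * ENNReal.ofReal ‖w‖ := by
        refine nq_mono_ae hq _ ?_
        filter_upwards [hf.hN.ub_ae] with w hw
        refine (hf.A_main hq hm0 hY w hγ).trans ?_
        calc _ ≤ ENNReal.ofReal (4 * (6 * ‖w‖ / Real.sqrt γ)) * (AA q m L f * 1) := by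
              gcongr
              rwa [ENNReal.ofReal_le_one]
          _ = _ := by
              rw [show 4 * (6 * ‖w‖ / Real.sqrt γ) = 24 / Real.sqrt γ * ‖w‖ by ring,
                ENNReal.ofReal_mul (by positivity)]
              ring
    _ = _ := by
        rw [nq_const_mul hq _ _ (by fun_prop), hf.hN.nq_ub hq, ENNReal.ofReal_mul (by positivity)]
        ring

theorem Good.P2f_le (hf : Good N L f) (hn : 0 < n) {q : ℝ} (hq : 2 ≤ q) {m : ℝ} (hm0 : 0 ≤ m)
    (hY : MartCotypeBound q Y m) {γ : ℝ} (hγ : 0 < γ) :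
    nq q ((ub N).prod (volume.prod volume)) (P2f f γ) ≤
      ENNReal.ofReal (128 * (Real.sqrt γ * (Real.sqrt n * MX N))) * AA q m L f := by
  have := hf.hN.ub_prob
  rw [nq_prod3 _ _ _ hq hf.P2f_meas]
  calc _ ≤ nq q (ub N) fun w => ENNReal.ofReal (128 * (Real.sqrt γ * (Real.sqrt n * MX N))) * AA q m L f := by
        refine nq_mono hq _ fun w => ?_
        have e : ∀ y : ℝ, (nq q volume fun x => P2f f γ (w, (y, x))) =
            nq q volume fun x => ENNReal.ofReal (Real.exp (-y)) *
              ‖f x - heat (γ * Real.exp (2 * y)) f x‖ₑ := fun y => by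
          have := nq_translate (q := q) (fun x => ENNReal.ofReal (Real.exp (-y)) *
              ‖f x - heat (γ * Real.exp (2 * y)) f x‖ₑ) (-(Real.exp y • w))
          simp only [sub_neg_eq_add] at this
          exact this
        simp only [e]
        refine (hf.B_main hn hq hm0 hY hγ).trans (le_of_eq ?_)
        rw [show 128 * (Real.sqrt γ * (Real.sqrt n * MX N))
          = 4 * (4 * Real.sqrt γ) * (8 * Real.sqrt n * MX N) by ring,
          ENNReal.ofReal_mul (p := 4 * (4 * Real.sqrt γ)) (q := 8 * Real.sqrt n * MX N) (by positivity)]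
        generalize AA q m L f = A, ENNReal.ofReal (4 * (4 * Real.sqrt γ)) = B
        ring
    _ = _ := nq_const hq _ _

theorem Good.lhs_le (hf : Good N L f) {q : ℝ} (hq : 2 ≤ q) {γ : ℝ} (hγ : 0 < γ) :
    (∫⁻ x, ∫⁻ t in Set.Ioi (0 : ℝ),
            ((∫⁻ y in {y : EuclideanSpace ℝ (Fin n) | N (y - x) ≤ t},
                (‖f y - taylor1 (heat (γ * t ^ 2) f) x y‖₊ : ℝ≥0∞) ^ q)
              / volume {y : EuclideanSpace ℝ (Fin n) | N (y - x) ≤ t})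
              / ENNReal.ofReal (t ^ (q + 1))) ^ (1 / q)
      ≤ nq q ((ub N).prod (volume.prod volume)) (fun p => P1f f γ p + P2f f γ p) := by
  have := hf.hN.ub_prob
  have hq0 : 0 ≤ q := by linarith
  have hm : Measurable fun p => (P1f f γ p + P2f f γ p) ^ q :=
    ((hf.P1f_meas hγ).add hf.P2f_meas).pow_const q
  unfold nq
  rw [lintegral_prod_symm' _ hm, lintegral_prod_symm' _ hm.lintegral_prod_left']
  refine ENNReal.rpow_le_rpow (lintegral_mono fun x => ?_) (by positivity)
  dsimp only
  rw [lintegral_exp_subst (fun t => ((∫⁻ y in {y : EuclideanSpace ℝ (Fin n) | N (y - x) ≤ t},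
                (‖f y - taylor1 (heat (γ * t ^ 2) f) x y‖₊ : ℝ≥0∞) ^ q)
              / volume {y : EuclideanSpace ℝ (Fin n) | N (y - x) ≤ t})) q hq0]
  refine lintegral_mono fun y => ?_
  dsimp only
  rw [hf.hN.avg (Real.exp_pos y), ← lintegral_const_mul' _ _ (by
    exact ENNReal.rpow_ne_top_of_nonneg hq0 ofReal_ne_top)]
  refine lintegral_mono fun w => ?_
  dsimp only
  rw [← ENNReal.mul_rpow_of_nonneg _ _ hq0, split_eq]
  refine ENNReal.rpow_le_rpow ?_ hq0
  have e : Real.exp y ^ 2 = Real.exp (2 * y) := by rw [← Real.exp_nat_mul]; norm_num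
  rw [P1f, P2f, ← mul_add, e]
  gcongr
  exact enorm_add_le _ _

theorem Good.final (hf : Good N L f) (hn : 0 < n) {q : ℝ} (hq : 2 ≤ q) {m : ℝ} (hm0 : 0 ≤ m)
    (hY : MartCotypeBound q Y m) :
    (∫⁻ x, ∫⁻ t in Set.Ioi (0 : ℝ),
            ((∫⁻ y in {y : EuclideanSpace ℝ (Fin n) | N (y - x) ≤ t},
                (‖f y - taylor1 (heat (IqX q N / (Real.sqrt n * MX N) * t ^ 2) f) x y‖₊ : ℝ≥0∞) ^ q)
              / volume {y : EuclideanSpace ℝ (Fin n) | N (y - x) ≤ t})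
              / ENNReal.ofReal (t ^ (q + 1))) ^ (1 / q)
          ≤ ENNReal.ofReal (304 * (n : ℝ) ^ ((1 : ℝ) / 4) * m * Real.sqrt (IqX q N * MX N) * L)
              * volume (tsupport f) ^ (1 / q) := by
  have hn0 : (0 : ℝ) < n := by exact_mod_cast hn
  have hI := hf.hN.iq_pos hn hq
  have hM := hf.hN.MX_pos hn
  have hL := hf.hL0
  have := hf.hN.ub_prob
  have hsn : 0 < Real.sqrt n := Real.sqrt_pos.2 hn0
  set I := IqX q N with hId
  set M := MX N with hMd
  have hγ : 0 < I / (Real.sqrt n * M) := by positivity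
  set γ := I / (Real.sqrt n * M) with hγd
  set Q := (n : ℝ) ^ ((1 : ℝ) / 4) * Real.sqrt (I * M) with hQ
  have hsγ : 0 < Real.sqrt γ := Real.sqrt_pos.2 hγ
  have hQ0 : 0 ≤ Q := by positivity
  have hQ2 : Q ^ 2 = Real.sqrt n * (I * M) := by
    rw [hQ, mul_pow, Real.sq_sqrt (by positivity), ← Real.rpow_natCast, ← Real.rpow_mul hn0.le,
      Real.sqrt_eq_rpow]
    norm_num
  have hQ' : Real.sqrt γ * (Real.sqrt n * M) = Q := by
    rw [← sq_eq_sq₀ (by positivity) hQ0, hQ2, mul_pow, Real.sq_sqrt hγ.le, hγd]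
    field_simp
  have hQ'' : 24 / Real.sqrt γ * I = 24 * Q := by
    have : I = Real.sqrt γ * Real.sqrt γ * (Real.sqrt n * M) := by
      rw [Real.mul_self_sqrt hγ.le, hγd]; field_simp
    rw [← hQ', this]
    field_simp
  refine (hf.lhs_le hq hγ).trans ((nq_add _ hq (hf.P1f_meas hγ) hf.P2f_meas).trans ?_)
  refine (add_le_add (hf.P1f_le hq hm0 hY hγ) (hf.P2f_le hn hq hm0 hY hγ)).trans ?_
  rw [← hId, ← hMd, hQ', hQ'', ← add_mul, ← ENNReal.ofReal_add (by positivity) (by positivity), AA]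
  calc _ ≤ ENNReal.ofReal (24 * Q + 128 * Q) * (ENNReal.ofReal (m * L) *
          (2 * volume (tsupport f) ^ (1 / q))) := by
        gcongr
        rw [ENNReal.mul_rpow_of_nonneg _ _ (by positivity)]
        gcongr
        calc (2 : ℝ≥0∞) ^ (1 / q) ≤ 2 ^ (1 : ℝ) := by
              refine ENNReal.rpow_le_rpow_of_exponent_le (by norm_num) ?_
              rw [div_le_one (by linarith)]; linarith
          _ = 2 := ENNReal.rpow_one _
    _ = _ := by
        rw [show 304 * (n : ℝ) ^ ((1 : ℝ) / 4) * m * Real.sqrt (I * M) * L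
          = (24 * Q + 128 * Q) * (m * L) * 2 by rw [hQ]; ring,
          ENNReal.ofReal_mul (p := (24 * Q + 128 * Q) * (m * L)) (q := 2) (by positivity),
          ENNReal.ofReal_mul (p := 24 * Q + 128 * Q) (q := m * L) (by positivity)]
        rw [show ENNReal.ofReal 2 = 2 by simp]
        ring

end D

/-- **Theorem (vector-valued Dorronsoro estimate for the heat semigroup).** -/
theorem statement2 :
    ∃ κ : ℝ, 2 ≤ κ ∧
      ∀ (q : ℝ), 2 ≤ q → ∀ (n : ℕ), 0 < n →
      ∀ (N : EuclideanSpace ℝ (Fin n) → ℝ), IsNorm N →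
      ∀ (Y : Type u) [NormedAddCommGroup Y] [NormedSpace ℝ Y] [CompleteSpace Y],
      ∀ m : ℝ, 0 ≤ m → MartCotypeBound q Y m →
      ∀ (f : EuclideanSpace ℝ (Fin n) → Y) (L : ℝ), 0 ≤ L →
        HasCompactSupport f → (∀ x y, ‖f x - f y‖ ≤ L * N (x - y)) →
        (∫⁻ x, ∫⁻ t in Set.Ioi (0 : ℝ),
            ((∫⁻ y in {y : EuclideanSpace ℝ (Fin n) | N (y - x) ≤ t},
                (‖f y - taylor1 (heat (IqX q N / (Real.sqrt n * MX N) * t ^ 2) f) x y‖₊ : ℝ≥0∞) ^ q)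
              / volume {y : EuclideanSpace ℝ (Fin n) | N (y - x) ≤ t})
              / ENNReal.ofReal (t ^ (q + 1))) ^ (1 / q)
          ≤ ENNReal.ofReal (κ * (n : ℝ) ^ ((1 : ℝ) / 4) * m * Real.sqrt (IqX q N * MX N) * L)
              * volume (tsupport f) ^ (1 / q) := by
  refine ⟨304, by norm_num, ?_⟩
  intro q hq n hn N hN Y _ _ _ m hm0 hY f L hL hcs hlip
  exact (Good.mk hN hL hcs hlip).final hn hq hm0 hY
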